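/- arXiv:1906.10016 — 2 statements merged into one kernel-verified Lean document; each statement's English description precedes it below -/
import Mathlib

section
/- Let I be a finite index set and {X_i : i ∈ I} nonnegative integer-valued random variables on a common probability space satisfying the local dependence condition (LD2): for each i ∈ I there are subsets A_i ⊆ B_i ⊆ I with i ∈ A_i such that X_i is independent of {X_j : j ∉ A_i} and {X_j : j ∈ A_i} is independent of {X_j : j ∉ B_i}. Set W = Σ_{i∈I} X_i, Z_i = Σ_{j∈A_i} X_j, Z_i' = Σ_{j∈B_i} X_j, μ_i = E[X_i], μ = E[W], σ² = Var(W). Suppose for each i there is a σ-algebra 𝓕_i such that every X_j with j ∈ B_i is 𝓕_i-measurable, and θ_i ∈ [0,1] is a constant with P(W = j | 𝓕_i) ≤ θ_i almost surely for every j ∈ ℤ≥0. Let a < μ be an integer, λ = μ − a, and let k be an integer with k > λ and k ≥ 2. Then |P(W − a ≥ k)/F̄_λ(k) − 1| ≤ C2(λ,k)·Σ_{i∈I} θ_i·{ |E[(X_i − μ_i)Z_i]|·E[Z_i'] + E[|X_i − μ_i|·Z_i·(Z_i' − Z_i/2 − 1/2)] } + C1(λ,k)·|λ − σ²| + P(W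 − a ≤ −2). -/
open MeasureTheory ProbabilityTheory Finset Real

/-- Poisson point probability `π_j(λ) = e^{-λ} λ^j / j!`. -/
noncomputable def poissonPMF (l : ℝ) (j : ℕ) : ℝ := Real.exp (-l) * l ^ j / (Nat.factorial j)

/-- Poisson CDF `F_λ(j) = Σ_{i=0}^{j} π_i(λ)`. -/
noncomputable def poissonCDF (l : ℝ) (j : ℕ) : ℝ := ∑ i ∈ Finset.range (j + 1), poissonPMF l i

/-- Poisson right tail `F̄_λ(j) = Σ_{i=j}^{∞} π_i(λ)`. -/
noncomputable def poissonTail (l : ℝ) (j : ℕ) : ℝ := ∑' i : ℕ, poissonPMF l (j + i)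

/-- `C0(λ,k) = F_λ(k-1)/(k·π_k(λ))`. -/
noncomputable def SteinC0 (l : ℝ) (k : ℕ) : ℝ := poissonCDF l (k - 1) / (k * poissonPMF l k)

/-- `C1(λ,k)`. -/
noncomputable def SteinC1 (l : ℝ) (k : ℕ) : ℝ :=
  SteinC0 l k * (1 - min (poissonCDF l (k - 2) * l / ((k - 1) * poissonCDF l (k - 1)))
    (poissonTail l (k + 1) * k / (poissonTail l k * l)))

/-- `C2(λ,k)`. -/
noncomputable def SteinC2 (l : ℝ) (k : ℕ) : ℝ :=
  SteinC0 l k * (2 - poissonCDF l (k - 2) * l / ((k - 1) * poissonCDF l (k - 1))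
    - poissonTail l (k + 1) * k / (poissonTail l k * l))

/-- `f` solves the Poisson–Stein equation for the indicator of `[k,∞)`, with `f 0 = f 1`. -/
def IsSteinSolution (l : ℝ) (k : ℕ) (f : ℕ → ℝ) : Prop :=
  f 0 = f 1 ∧ ∀ j : ℕ, l * f (j + 1) - (j : ℝ) * f j =
    (if k ≤ j then (1 : ℝ) else 0) - poissonTail l k

lemma poissonPMF_pos' {l : ℝ} (hl : 0 < l) (j : ℕ) : 0 < poissonPMF l j := by
  unfold _root_.poissonPMF; positivity

lemma poissonPMF_succ' (l : ℝ) (j : ℕ) :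
    ((j : ℝ) + 1) * poissonPMF l (j + 1) = l * poissonPMF l j := by
  unfold _root_.poissonPMF
  rw [Nat.factorial_succ]; push_cast
  field_simp
  ring

lemma hasSum_poissonPMF (l : ℝ) : HasSum (poissonPMF l) 1 := by
  have h := (NormedSpace.expSeries_div_hasSum_exp (𝔸 := ℝ) l).mul_left (Real.exp (-l))
  rw [← Real.exp_eq_exp_ℝ, ← Real.exp_add] at h
  simp only [neg_add_cancel, Real.exp_zero] at h
  have e : _root_.poissonPMF l = fun j => Real.exp (-l) * (l ^ j / (Nat.factorial j)) := by
    ext j; unfold _root_.poissonPMF; ring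
  rw [e]; exact h

lemma summable_tail (l : ℝ) (j : ℕ) : Summable (fun i => poissonPMF l (j + i)) := by
  have := (summable_nat_add_iff j).2 (hasSum_poissonPMF l).summable
  simpa [add_comm] using this

lemma poissonTail_pos {l : ℝ} (hl : 0 < l) (j : ℕ) : 0 < poissonTail l j :=
  (summable_tail l j).tsum_pos (fun i => (poissonPMF_pos' hl _).le) 0 (poissonPMF_pos' hl _)

lemma poissonTail_succ (l : ℝ) (j : ℕ) :
    poissonTail l (j + 1) = poissonTail l j - poissonPMF l j := by
  unfold poissonTail
  rw [(summable_tail l j).tsum_eq_zero_add]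
  simp only [add_zero, add_sub_cancel_left]
  congr 1; ext i; congr 1; ring

lemma cdf_add_tail (l : ℝ) (j : ℕ) : poissonCDF l j + poissonTail l (j + 1) = 1 := by
  have h := (hasSum_poissonPMF l).summable.sum_add_tsum_nat_add (j + 1)
  rw [(hasSum_poissonPMF l).tsum_eq] at h
  unfold poissonCDF poissonTail
  rw [← h]; congr 2; ext i; congr 1; ring

lemma poissonCDF_succ (l : ℝ) (j : ℕ) :
    poissonCDF l (j + 1) = poissonCDF l j + poissonPMF l (j + 1) := by
  unfold poissonCDF; rw [Finset.sum_range_succ]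

lemma poissonCDF_pos {l : ℝ} (hl : 0 < l) (j : ℕ) : 0 < poissonCDF l j :=
  Finset.sum_pos (fun i _ => poissonPMF_pos' hl i) (by simp)

/-- Lower branch: `uu l j` is `F(j)/((j+1) π_{j+1})`. -/
noncomputable def uu (l : ℝ) (j : ℕ) : ℝ := poissonCDF l j / ((j + 1) * poissonPMF l (j + 1))
/-- Upper branch: `vv l j` is `F̄(j+1)/((j+1) π_{j+1})`. -/
noncomputable def vv (l : ℝ) (j : ℕ) : ℝ :=
  poissonTail l (j + 1) / ((j + 1) * poissonPMF l (j + 1))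

lemma uu_pos {l : ℝ} (hl : 0 < l) (j : ℕ) : 0 < uu l j := by
  have := poissonPMF_pos' hl (j + 1)
  have := poissonCDF_pos hl j
  unfold uu; positivity

lemma vv_pos {l : ℝ} (hl : 0 < l) (j : ℕ) : 0 < vv l j := by
  have := poissonPMF_pos' hl (j + 1)
  have := poissonTail_pos hl (j + 1)
  unfold vv; positivity

lemma uu_zero {l : ℝ} (hl : 0 < l) : uu l 0 = 1 / l := by
  have h0 := poissonPMF_pos' hl 0
  unfold uu
  rw [poissonPMF_succ' l 0]
  simp only [poissonCDF]
  simp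
  field_simp

lemma uu_succ {l : ℝ} (hl : 0 < l) (j : ℕ) : l * uu l (j + 1) = (j + 1) * uu l j + 1 := by
  have h0 := poissonPMF_pos' hl (j + 1)
  have h1 := poissonPMF_succ' l (j + 1)
  unfold uu
  rw [h1, poissonCDF_succ]
  field_simp

lemma vv_succ {l : ℝ} (hl : 0 < l) (j : ℕ) : l * vv l (j + 1) = (j + 1) * vv l j - 1 := by
  have h0 := poissonPMF_pos' hl (j + 1)
  have h1 := poissonPMF_succ' l (j + 1)
  unfold vv
  rw [h1, poissonTail_succ]
  field_simp

lemma uu_diff {l : ℝ} (hl : 0 < l) (j : ℕ) :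
    0 < uu l (j + 1) - uu l j ∧ 0 < uu l (j + 2) - 2 * uu l (j + 1) + uu l j := by
  induction j with
  | zero =>
    have h0 := uu_zero hl
    have h1 := uu_succ hl 0
    have h2 := uu_succ hl 1
    simp only [zero_add] at *
    have e1 : uu l 1 = (1 + l) / l ^ 2 := by
      rw [h0] at h1; field_simp at h1 ⊢; push_cast at h1; nlinarith
    have e2 : uu l 2 = (2 * (1 + l) / l ^ 2 + 1) / l := by
      rw [e1] at h2; rw [eq_div_iff hl.ne']; push_cast at h2; rw [mul_comm, h2]; ring
    rw [e2, e1, h0]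
    constructor
    · have : (1 + l) / l ^ 2 - 1 / l = 1 / l ^ 2 := by field_simp; ring
      rw [this]; positivity
    · have : (2 * (1 + l) / l ^ 2 + 1) / l - 2 * ((1 + l) / l ^ 2) + 1 / l = 2 / l ^ 3 := by
        field_simp; ring
      rw [this]; positivity
  | succ j ih =>
    obtain ⟨i1, i2⟩ := ih
    have h1 := uu_succ hl j
    have h2 := uu_succ hl (j + 1)
    have h3 := uu_succ hl (j + 2)
    have p1 := uu_pos hl (j + 1)
    push_cast at *
    simp only [add_assoc] at *
    norm_num at *
    have A : 0 < l * (uu l (j + 2) - uu l (j + 1)) := by nlinarith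
    have A' := pos_of_mul_pos_right A hl.le
    have B : 0 < l * (uu l (j + 3) - 2 * uu l (j + 2) + uu l (j + 1)) := by
      have : l * (uu l (j + 3) - 2 * uu l (j + 2) + uu l (j + 1)) =
        (j + 1) * (uu l (j + 2) - 2 * uu l (j + 1) + uu l j)
          + 2 * (uu l (j + 2) - uu l (j + 1)) := by linarith
      rw [this]; positivity
    have B' := pos_of_mul_pos_right B hl.le
    constructor <;> linarith

lemma vv_eq {l : ℝ} (hl : 0 < l) (j : ℕ) :
    HasSum (fun i => l ^ i * (Nat.factorial j) / (Nat.factorial (j + 1 + i))) (vv l j) := by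
  unfold vv poissonTail
  have := (summable_tail l (j + 1)).hasSum.div_const ((j + 1) * poissonPMF l (j + 1))
  have e : (fun i => l ^ i * (Nat.factorial j : ℝ) / (Nat.factorial (j + 1 + i))) =
      fun i => _root_.poissonPMF l (j + 1 + i) / ((j + 1) * _root_.poissonPMF l (j + 1)) := by
    ext i
    unfold _root_.poissonPMF
    rw [Nat.factorial_succ j]; push_cast
    field_simp
    ring
  rw [e]; exact this

lemma vv_anti {l : ℝ} (hl : 0 < l) (j : ℕ) : vv l (j + 1) ≤ vv l j := by
  refine hasSum_le (fun i => ?_) (vv_eq hl (j + 1)) (vv_eq hl j)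
  rw [show j + 1 + 1 + i = (j + 1 + i) + 1 by ring, Nat.factorial_succ, Nat.factorial_succ]
  push_cast
  rw [div_le_div_iff₀ (by positivity) (by positivity)]
  have : (0 : ℝ) ≤ l ^ i * Nat.factorial j * Nat.factorial (j + 1 + i) := by positivity
  nlinarith [mul_nonneg this (show (0 : ℝ) ≤ i + 1 by positivity)]

lemma vv_conv {l : ℝ} (hl : 0 < l) (j : ℕ) : 0 ≤ vv l (j + 2) - 2 * vv l (j + 1) + vv l j := by
  refine hasSum_le (fun i => ?_) (hasSum_zero)
    (((vv_eq hl (j + 2)).sub ((vv_eq hl (j + 1)).mul_left 2)).add (vv_eq hl j))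
  rw [show j + 1 + 1 + i = (j + 1 + i) + 1 by ring, show j + 2 + 1 + i = (j + 1 + i) + 2 by ring,
    Nat.factorial_succ (j + 1 + i + 1), Nat.factorial_succ (j + 1 + i),
    Nat.factorial_succ (j + 1), Nat.factorial_succ j]
  push_cast
  have : l ^ i * (((j : ℝ) + 1 + 1) * ((j + 1) * (Nat.factorial j))) /
      ((j + 1 + i + 1 + 1) * ((j + 1 + i + 1) * Nat.factorial (j + 1 + i)))
      - 2 * (l ^ i * (((j : ℝ) + 1) * (Nat.factorial j)) /
        ((j + 1 + i + 1) * Nat.factorial (j + 1 + i)))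
      + l ^ i * (Nat.factorial j) / Nat.factorial (j + 1 + i)
      = l ^ i * (Nat.factorial j) / Nat.factorial (j + 1 + i) * ((i + 1) * (i + 2)) /
        ((j + 1 + i + 1 + 1) * (j + 1 + i + 1)) := by
    field_simp; ring
  rw [this]; positivity

/-- The (negated, normalised) Stein solution, extended to all integers. -/
noncomputable def gS (l : ℝ) (k : ℕ) : ℤ → ℝ
  | Int.ofNat 0 => (1 + l) / (l * (2 + l))
  | Int.ofNat (j + 1) =>
      if j + 1 ≤ k then uu l j else poissonCDF l (k - 1) / poissonTail l k * vv l j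
  | Int.negSucc m => 1 / (m + 2 + l)

lemma gS_zero (l : ℝ) (k : ℕ) : gS l k 0 = (1 + l) / (l * (2 + l)) := rfl

lemma gS_low (l : ℝ) (k j : ℕ) (h : j + 1 ≤ k) : gS l k ((j : ℤ) + 1) = uu l j := by
  have : gS l k ((j : ℤ) + 1) =
    if j + 1 ≤ k then uu l j else poissonCDF l (k - 1) / poissonTail l k * vv l j := rfl
  rw [this, if_pos h]

lemma gS_high {l : ℝ} (hl : 0 < l) (k j : ℕ) (hk : 1 ≤ k) (h : k ≤ j + 1) :
    gS l k ((j : ℤ) + 1) = poissonCDF l (k - 1) / poissonTail l k * vv l j := by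
  have h0 : gS l k ((j : ℤ) + 1) =
    if j + 1 ≤ k then uu l j else poissonCDF l (k - 1) / poissonTail l k * vv l j := rfl
  rw [h0]
  split_ifs with h'
  · have : k = j + 1 := le_antisymm h h'
    subst this
    have := poissonTail_pos hl (j + 1)
    simp only [uu, vv, Nat.add_sub_cancel]
    field_simp
  · rfl

lemma gS_neg (l : ℝ) (k m : ℕ) : gS l k (-(m : ℤ) - 1) = 1 / (m + 2 + l) := by
  have : (-(m : ℤ) - 1) = Int.negSucc m := by rw [Int.negSucc_eq]; ring
  rw [this]; rfl

/-- Convexity below `k`. -/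
lemma gS_conv_low {l : ℝ} (hl : 0 < l) (k : ℕ) (hk : 2 ≤ k) (j : ℤ) (hj : j + 2 ≤ k) :
    0 ≤ gS l k (j + 2) - 2 * gS l k (j + 1) + gS l k j := by
  have key : (1 ≤ j) ∨ j = 0 ∨ j = -1 ∨ j = -2 ∨ j ≤ -3 := by omega
  rcases key with h | h | h | h | h
  · obtain ⟨n, rfl⟩ : ∃ n : ℕ, j = n + 1 := ⟨(j - 1).toNat, by omega⟩
    have e1 := gS_low l k n (by omega)
    have e2 := gS_low l k (n + 1) (by omega)
    have e3 := gS_low l k (n + 2) (by omega)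
    push_cast at e2 e3
    rw [show (n : ℤ) + 1 + 2 = n + 2 + 1 by ring, e1, e2, e3]
    exact (uu_diff hl n).2.le
  · subst h
    have e1 := gS_low l k 0 (by omega)
    have e2 := gS_low l k 1 (by omega)
    have h1 := uu_succ hl 0
    rw [uu_zero hl] at *
    norm_num at *
    rw [e1, e2, gS_zero]
    have : uu l 1 = (1 + l) / l ^ 2 := by
      field_simp at h1 ⊢; nlinarith
    rw [this]
    have : (1 + l) / l ^ 2 - 2 * l⁻¹ + (1 + l) / (l * (2 + l)) = 2 / (l ^ 2 * (2 + l)) := by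
      field_simp; ring
    rw [this]; positivity
  · subst h
    have e1 := gS_low l k 0 (by omega)
    have e2 := gS_neg l k 0
    rw [uu_zero hl] at *
    norm_num at *
    rw [e1, e2, gS_zero]
    apply le_of_eq
    field_simp; ring
  · subst h
    have e2 := gS_neg l k 0
    have e3 := gS_neg l k 1
    norm_num at *
    rw [e3, e2, gS_zero]
    have : (1 + l) / (l * (2 + l)) - 2 * (2 + l)⁻¹ + (3 + l)⁻¹
       = 3 / (l * (2 + l) * (3 + l)) := by
      field_simp; ring
    rw [this]; positivity
  · obtain ⟨n, rfl⟩ : ∃ n : ℕ, j = - (n : ℤ) - 3 := ⟨(-j - 3).toNat, by omega⟩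
    have e1 := gS_neg l k n
    have e2 := gS_neg l k (n + 1)
    have e3 := gS_neg l k (n + 2)
    push_cast at e2 e3
    rw [show -(n : ℤ) - 3 + 2 = -n - 1 by ring, show -(n : ℤ) - 3 + 1 = -(n + 1) - 1 by ring,
      show -(n : ℤ) - 3 = -(n + 2) - 1 by ring, e1, e2, e3]
    have : 1 / ((n : ℝ) + 2 + l) - 2 * (1 / (n + 1 + 2 + l)) + 1 / (n + 2 + 2 + l)
      = 2 / ((n + 2 + l) * (n + 3 + l) * (n + 4 + l)) := by
      field_simp; ring
    rw [this]; positivity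

lemma gS_conv_high {l : ℝ} (hl : 0 < l) (k : ℕ) (hk : 2 ≤ k) (j : ℤ) (hj : (k : ℤ) ≤ j) :
    0 ≤ gS l k (j + 2) - 2 * gS l k (j + 1) + gS l k j := by
  obtain ⟨n, rfl⟩ : ∃ n : ℕ, j = n + 1 := ⟨(j - 1).toNat, by omega⟩
  have e1 := gS_high hl k n (by omega) (by omega)
  have e2 := gS_high hl k (n + 1) (by omega) (by omega)
  have e3 := gS_high hl k (n + 2) (by omega) (by omega)
  push_cast at e2 e3
  rw [show (n : ℤ) + 1 + 2 = n + 2 + 1 by ring, e1, e2, e3]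
  have h1 := vv_conv hl n
  have h2 : 0 < poissonCDF l (k - 1) / poissonTail l k :=
    div_pos (poissonCDF_pos hl _) (poissonTail_pos hl _)
  nlinarith [mul_nonneg h2.le h1]

lemma gS_anti_high {l : ℝ} (hl : 0 < l) (k : ℕ) (hk : 2 ≤ k) (j : ℤ) (hj : (k : ℤ) ≤ j) :
    gS l k (j + 1) - gS l k j ≤ 0 := by
  obtain ⟨n, rfl⟩ : ∃ n : ℕ, j = n + 1 := ⟨(j - 1).toNat, by omega⟩
  have e1 := gS_high hl k n (by omega) (by omega)
  have e2 := gS_high hl k (n + 1) (by omega) (by omega)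
  push_cast at e2
  rw [e1, e2]
  have h1 := vv_anti hl n
  have h2 : 0 < poissonCDF l (k - 1) / poissonTail l k :=
    div_pos (poissonCDF_pos hl _) (poissonTail_pos hl _)
  nlinarith [mul_le_mul_of_nonneg_left h1 h2.le]

lemma gS_mono_low {l : ℝ} (hl : 0 < l) (k : ℕ) (hk : 2 ≤ k) (j : ℤ) (hj : j + 1 ≤ k) :
    0 ≤ gS l k (j + 1) - gS l k j := by
  have key : -1 ≤ j ∨ j ≤ -2 := by omega
  rcases key with h | h
  · obtain ⟨n, rfl⟩ : ∃ n : ℕ, j = n - 1 := ⟨(j + 1).toNat, by omega⟩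
    clear h
    induction n with
    | zero =>
      have e2 := gS_neg l k 0
      norm_num at *
      rw [e2, gS_zero]
      rw [← sub_nonneg]
      have : (1 + l) / (l * (2 + l)) - (2 + l)⁻¹ = 1 / (l * (2 + l)) := by
        field_simp; ring
      rw [this]; positivity
    | succ n ih =>
      have := gS_conv_low hl k hk (n - 1) (by push_cast at hj; omega)
      have := ih (by push_cast at hj; omega)
      push_cast
      rw [show (n : ℤ) + 1 - 1 = n - 1 + 1 by ring, show (n : ℤ) - 1 + 1 + 1 = n - 1 + 2 by ring]
      linarith
  · obtain ⟨n, rfl⟩ : ∃ n : ℕ, j = - (n : ℤ) - 2 := ⟨(-j - 2).toNat, by omega⟩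
    have e1 := gS_neg l k n
    have e2 := gS_neg l k (n + 1)
    push_cast at e2
    rw [show -(n : ℤ) - 2 + 1 = -n - 1 by ring, 
      show -(n : ℤ) - 2 = -(n + 1) - 1 by ring, e1, e2, sub_nonneg]
    apply one_div_le_one_div_of_le (by positivity); linarith

lemma gS_nonneg {l : ℝ} (hl : 0 < l) (k : ℕ) (j : ℤ) : 0 ≤ gS l k j := by
  have h2 : 0 < poissonCDF l (k - 1) / poissonTail l k :=
    div_pos (poissonCDF_pos hl _) (poissonTail_pos hl _)
  match j with
  | Int.ofNat 0 => simp only [gS]; positivity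
  | Int.ofNat (j + 1) =>
    have := uu_pos hl j
    have := vv_pos hl j
    simp only [gS]
    split_ifs <;> positivity
  | Int.negSucc m => simp only [gS]; positivity

lemma gS_le {l : ℝ} (hl : 0 < l) (k : ℕ) (hk : 2 ≤ k) (j : ℤ) : gS l k j ≤ gS l k k := by
  rcases le_total j k with h | h
  · obtain ⟨n, rfl⟩ : ∃ n : ℕ, j = k - n := ⟨(k - j).toNat, by omega⟩
    clear h
    induction n with
    | zero => simp
    | succ n ih =>
      have := gS_mono_low hl k hk (k - (n + 1)) (by omega)
      rw [show (k : ℤ) - (n + 1) + 1 = k - n by ring] at this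
      push_cast; linarith
  · obtain ⟨n, rfl⟩ : ∃ n : ℕ, j = k + n := ⟨(j - k).toNat, by omega⟩
    clear h
    induction n with
    | zero => simp
    | succ n ih =>
      have := gS_anti_high hl k hk (k + n) (by omega)
      rw [show (k : ℤ) + n + 1 = k + (n + 1) by ring] at this
      push_cast; linarith

lemma gS_D1 {l : ℝ} (hl : 0 < l) (k : ℕ) (hk : 2 ≤ k) :
    gS l k k - gS l k (k - 1) = SteinC0 l k *
      (1 - poissonCDF l (k - 2) * l / ((k - 1) * poissonCDF l (k - 1))) := by
  obtain ⟨n, rfl⟩ : ∃ n : ℕ, k = n + 2 := ⟨k - 2, by omega⟩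
  have e1 := gS_low l (n + 2) n (by omega)
  have e2 := gS_low l (n + 2) (n + 1) (by omega)
  push_cast at *
  rw [show (n : ℤ) + 2 - 1 = n + 1 by ring, show (n : ℤ) + 2 = n + 1 + 1 by ring, e1, e2]
  simp only [SteinC0, uu, show n + 2 - 1 = n + 1 by omega, show n + 2 - 2 = n by omega,
    show n + 1 + 1 = n + 2 by omega]
  have h0 := poissonPMF_pos' hl (n + 1)
  have h1 := poissonPMF_succ' l (n + 1)
  have h2 := poissonCDF_pos hl (n + 1)
  push_cast at *
  simp only [add_assoc] at *
  norm_num at *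
  rw [h1]
  rw [show (n : ℝ) + 2 - 1 = n + 1 by ring]
  field_simp

lemma gS_D2 {l : ℝ} (hl : 0 < l) (k : ℕ) (hk : 2 ≤ k) :
    gS l k k - gS l k (k + 1) = SteinC0 l k *
      (1 - poissonTail l (k + 1) * k / (poissonTail l k * l)) := by
  obtain ⟨n, rfl⟩ : ∃ n : ℕ, k = n + 1 := ⟨k - 1, by omega⟩
  have e1 := gS_high hl (n + 1) n (by omega) (by omega)
  have e2 := gS_high hl (n + 1) (n + 1) (by omega) (by omega)
  push_cast at *
  rw [e1, e2]
  simp only [SteinC0, vv, show n + 1 - 1 = n by omega, 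
    show n + 1 + 1 = n + 2 by omega]
  have h0 := poissonPMF_pos' hl (n + 1)
  have h1 := poissonPMF_succ' l (n + 1)
  have h2 := poissonTail_pos hl (n + 1)
  push_cast at *
  simp only [add_assoc] at *
  norm_num at *
  rw [h1]
  field_simp

lemma gS_stein {l : ℝ} (hl : 0 < l) (k : ℕ) (hk : 2 ≤ k) (j : ℤ) :
    |l * gS l k (j + 1) - j * gS l k j - (1 - if (k : ℤ) ≤ j then 1 / poissonTail l k else 0)|
      ≤ if j ≤ -2 then 1 else 0 := by
  have key : (k : ℤ) ≤ j ∨ (1 ≤ j ∧ j < k) ∨ j = 0 ∨ j = -1 ∨ j ≤ -2 := by omega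
  rcases key with h | h | h | h | h
  · rw [if_pos h, if_neg (by omega)]
    obtain ⟨n, rfl⟩ : ∃ n : ℕ, j = n + 1 := ⟨(j - 1).toNat, by omega⟩
    have e1 := gS_high hl k n (by omega) (by omega)
    have e2 := gS_high hl k (n + 1) (by omega) (by omega)
    have h3 := vv_succ hl n
    have h4 := cdf_add_tail l (k - 1)
    rw [show k - 1 + 1 = k by omega] at h4
    have h5 := poissonTail_pos hl k
    push_cast at *
    rw [e1, e2]
    apply le_of_eq
    rw [abs_eq_zero, show poissonCDF l (k - 1) = 1 - poissonTail l k by linarith]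
    have : l * ((1 - poissonTail l k) / poissonTail l k * vv l (n + 1)) =
      (1 - poissonTail l k) / poissonTail l k * (l * vv l (n + 1)) := by ring
    rw [this, h3]
    field_simp
    ring
  · rw [if_neg (by omega), if_neg (by omega)]
    obtain ⟨n, rfl⟩ : ∃ n : ℕ, j = n + 1 := ⟨(j - 1).toNat, by omega⟩
    have e1 := gS_low l k n (by omega)
    have e2 := gS_low l k (n + 1) (by omega)
    have h3 := uu_succ hl n
    push_cast at *
    rw [e1, e2]
    apply le_of_eq
    rw [abs_eq_zero]
    linarith
  · subst h
    rw [if_neg (by omega), if_neg (by omega)]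
    have e1 := gS_low l k 0 (by omega)
    rw [uu_zero hl] at e1
    norm_num at *
    rw [e1]
    field_simp; ring
  · subst h
    rw [if_neg (by omega), if_neg (by omega)]
    have e2 := gS_neg l k 0
    norm_num at *
    rw [e2, gS_zero]
    field_simp; ring
  · rw [if_neg (by omega), if_pos (by omega)]
    obtain ⟨n, rfl⟩ : ∃ n : ℕ, j = - (n : ℤ) - 2 := ⟨(-j - 2).toNat, by omega⟩
    have e1 := gS_neg l k n
    have e2 := gS_neg l k (n + 1)
    push_cast at *
    rw [show -(n : ℤ) - 2 + 1 = -n - 1 by ring, show -(n : ℤ) - 2 = -(n + 1) - 1 by ring, e1, e2]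
    have a1 : l * (1 / ((n : ℝ) + 2 + l)) ≤ 1 := by
      rw [mul_one_div, div_le_one (by positivity)]; linarith [Nat.cast_nonneg (α := ℝ) n]
    have a2 : 0 ≤ l * (1 / ((n : ℝ) + 2 + l)) := by positivity
    have a3 : ((n : ℝ) + 2) * (1 / ((n : ℝ) + 1 + 2 + l)) ≤ 1 := by
      rw [mul_one_div, div_le_one (by positivity)]; linarith [Nat.cast_nonneg (α := ℝ) n]
    have a4 : 0 ≤ ((n : ℝ) + 2) * (1 / ((n : ℝ) + 1 + 2 + l)) := by positivity
    rw [abs_le]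
    constructor <;> linarith

lemma SteinC0_pos {l : ℝ} (hl : 0 < l) (k : ℕ) (hk : 2 ≤ k) : 0 < SteinC0 l k := by
  have := poissonPMF_pos' hl k
  have := poissonCDF_pos hl (k - 1)
  have : (0 : ℝ) < k := by positivity
  unfold SteinC0; positivity

lemma gS_low_le {l : ℝ} (hl : 0 < l) (k : ℕ) (hk : 2 ≤ k) (j : ℤ) (hj : j ≤ k - 1) :
    gS l k (j + 1) - gS l k j ≤ gS l k k - gS l k (k - 1) := by
  obtain ⟨n, rfl⟩ : ∃ n : ℕ, j = k - 1 - n := ⟨(k - 1 - j).toNat, by omega⟩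
  clear hj
  induction n with
  | zero => simp
  | succ n ih =>
    have := gS_conv_low hl k hk (k - 1 - (n + 1)) (by omega)
    rw [show (k : ℤ) - 1 - (n + 1) + 2 = k - 1 - n + 1 by ring,
      show (k : ℤ) - 1 - (n + 1) + 1 = k - 1 - n by ring] at this
    push_cast
    rw [show (k : ℤ) - 1 - (n + 1) + 1 = k - 1 - n by ring]
    linarith

lemma gS_high_ge {l : ℝ} (hl : 0 < l) (k : ℕ) (hk : 2 ≤ k) (j : ℤ) (hj : (k : ℤ) ≤ j) :
    gS l k (k + 1) - gS l k k ≤ gS l k (j + 1) - gS l k j := by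
  obtain ⟨n, rfl⟩ : ∃ n : ℕ, j = k + n := ⟨(j - k).toNat, by omega⟩
  clear hj
  induction n with
  | zero => simp
  | succ n ih =>
    have := gS_conv_high hl k hk (k + n) (by omega)
    push_cast
    rw [show (k : ℤ) + (n + 1) + 1 = k + n + 2 by ring,
      show (k : ℤ) + (n + 1) = k + n + 1 by ring]
    linarith

lemma SteinC2_eq {l : ℝ} (hl : 0 < l) (k : ℕ) (hk : 2 ≤ k) :
    SteinC2 l k = (gS l k k - gS l k (k - 1)) + (gS l k k - gS l k (k + 1)) := by
  rw [gS_D1 hl k hk, gS_D2 hl k hk]; unfold SteinC2; ring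

lemma gS_C1 {l : ℝ} (hl : 0 < l) (k : ℕ) (hk : 2 ≤ k) (j : ℤ) :
    |gS l k (j + 1) - gS l k j| ≤ SteinC1 l k := by
  have h0 := SteinC0_pos hl k hk
  have h1 : gS l k k - gS l k (k - 1) ≤ SteinC1 l k := by
    rw [gS_D1 hl k hk]; unfold SteinC1
    gcongr; exact min_le_left _ _
  have h2 : gS l k k - gS l k (k + 1) ≤ SteinC1 l k := by
    rw [gS_D2 hl k hk]; unfold SteinC1
    gcongr; exact min_le_right _ _
  rcases le_or_gt (k : ℤ) j with h | h
  · have := gS_high_ge hl k hk j h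
    have := gS_anti_high hl k hk j h
    rw [abs_le]; constructor <;> linarith
  · have := gS_low_le hl k hk j (by omega)
    have := gS_mono_low hl k hk j (by omega)
    rw [abs_le]; constructor <;> linarith

/-- Monotone potential dominating the second differences. -/
noncomputable def potS (l : ℝ) (k : ℕ) (j : ℤ) : ℝ :=
  (gS l k (j + 1) - gS l k j) + if (k : ℤ) ≤ j then SteinC2 l k else 0

lemma potS_mem {l : ℝ} (hl : 0 < l) (k : ℕ) (hk : 2 ≤ k) (j : ℤ) :
    0 ≤ potS l k j ∧ potS l k j ≤ SteinC2 l k := by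
  have a1 := gS_mono_low hl k hk (k - 1) (by omega)
  rw [sub_add_cancel] at a1
  have a2 := gS_anti_high hl k hk k le_rfl
  unfold potS
  rw [SteinC2_eq hl k hk]
  split_ifs with h
  · have := gS_high_ge hl k hk j h
    have := gS_anti_high hl k hk j h
    constructor <;> linarith
  · have := gS_low_le hl k hk j (by omega)
    have := gS_mono_low hl k hk j (by omega)
    constructor <;> linarith

lemma potS_step {l : ℝ} (hl : 0 < l) (k : ℕ) (hk : 2 ≤ k) (j : ℤ) :
    0 ≤ potS l k (j + 1) - potS l k j ∧
    gS l k (j + 2) - 2 * gS l k (j + 1) + gS l k j ≤ potS l k (j + 1) - potS l k j ∧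
    (if j = k - 1 then - SteinC2 l k else 0) ≤ gS l k (j + 2) - 2 * gS l k (j + 1) + gS l k j := by
  have hC := (potS_mem hl k hk j).1.trans (potS_mem hl k hk j).2
  unfold potS
  rw [show j + 1 + 1 = j + 2 by ring]
  have key : (k : ℤ) ≤ j ∨ j = k - 1 ∨ j + 2 ≤ k := by omega
  rcases key with h | h | h
  · have := gS_conv_high hl k hk j h
    rw [if_pos (by omega), if_pos h, if_neg (by omega)]
    refine ⟨?_, ?_, ?_⟩ <;> linarith
  · have e := SteinC2_eq hl k hk
    rw [if_pos (by omega), if_neg (by omega), if_pos h]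
    subst h
    rw [show (k : ℤ) - 1 + 2 = k + 1 by ring, show (k : ℤ) - 1 + 1 = k by ring]
    refine ⟨?_, ?_, ?_⟩ <;> linarith
  · have := gS_conv_low hl k hk j h
    rw [if_neg (by omega), if_neg (by omega), if_neg (by omega)]
    refine ⟨?_, ?_, ?_⟩ <;> linarith

/-- Second difference. -/
noncomputable def d2S (l : ℝ) (k : ℕ) (j : ℤ) : ℝ :=
  gS l k (j + 2) - 2 * gS l k (j + 1) + gS l k j

/-- First difference. -/
noncomputable def d1S (l : ℝ) (k : ℕ) (j : ℤ) : ℝ := gS l k (j + 1) - gS l k j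

lemma gS_abs {l : ℝ} (hl : 0 < l) (k : ℕ) (hk : 2 ≤ k) (j : ℤ) : |gS l k j| ≤ gS l k k := by
  rw [abs_of_nonneg (gS_nonneg hl k j)]; exact gS_le hl k hk j

lemma integrable_bdd_comp {Ω : Type*} [MeasurableSpace Ω] (ν : Measure Ω) [IsFiniteMeasure ν]
    (h : Ω → ℝ) (hm : Measurable h) (M : ℝ) (hM : ∀ ω, |h ω| ≤ M) : Integrable h ν :=
  Integrable.of_bound hm.aestronglyMeasurable M (Filter.Eventually.of_forall hM)

lemma d2S_abs {l : ℝ} (hl : 0 < l) (k : ℕ) (hk : 2 ≤ k) (j : ℤ) :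
    |d2S l k j| ≤ 2 * SteinC1 l k := by
  have h1 := gS_C1 hl k hk j
  have h2 := gS_C1 hl k hk (j + 1)
  rw [show j + 1 + 1 = j + 2 by ring] at h2
  unfold d2S
  rw [abs_le] at *
  constructor <;> linarith

lemma integral_d2S_le {Ω : Type*} [MeasurableSpace Ω] (ν : Measure Ω) [IsFiniteMeasure ν]
    (w : Ω → ℕ) (hw : Measurable w) (q : ℝ) (hq : ∀ n : ℕ, ν.real (w ⁻¹' {n}) ≤ q)
    {l : ℝ} (hl : 0 < l) (k : ℕ) (hk : 2 ≤ k) (c : ℤ) :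
    |∫ ω, d2S l k ((w ω : ℤ) - c) ∂ν| ≤ SteinC2 l k * q := by
  have hq0 : 0 ≤ q := measureReal_nonneg.trans (hq 0)
  have hC : 0 ≤ SteinC2 l k := (potS_mem hl k hk 0).1.trans (potS_mem hl k hk 0).2
  have hint : Integrable (fun ω => d2S l k ((w ω : ℤ) - c)) ν :=
    integrable_bdd_comp ν _ ((measurable_of_countable (fun n : ℕ => d2S l k ((n : ℤ) - c))).comp hw)
      _ (fun ω => d2S_abs hl k hk _)
  rw [abs_le]
  constructor
  · -- lower bound
    have h1 : ∀ ω, (w ⁻¹' {(c + k - 1).toNat}).indicator (fun _ => - SteinC2 l k) ω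
        ≤ d2S l k ((w ω : ℤ) - c) := by
      intro ω
      have := (potS_step hl k hk ((w ω : ℤ) - c)).2.2
      refine le_trans ?_ this
      by_cases h : (w ω : ℤ) - c = k - 1
      · rw [if_pos h, Set.indicator_of_mem]
        simp only [Set.mem_preimage, Set.mem_singleton_iff]
        omega
      · rw [if_neg h]
        apply Set.indicator_nonpos
        intro _ _; linarith
    have h2 := integral_mono (μ := ν) ((integrable_const _).indicator (hw (measurableSet_singleton _)))
      hint h1
    rw [integral_indicator_const _ (hw (measurableSet_singleton _))] at h2
    refine le_trans ?_ h2
    simp only [smul_eq_mul]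
    nlinarith [mul_le_mul_of_nonneg_left (hq (c + k - 1).toNat) hC]
  · set s : ℕ → ℝ := fun n => potS l k ((n : ℤ) - c + 1) - potS l k ((n : ℤ) - c) with hs
    have hs0 : ∀ n, 0 ≤ s n := fun n => (potS_step hl k hk _).1
    have hs1 : ∀ n, s n ≤ SteinC2 l k := fun n => by
      have := (potS_mem hl k hk ((n : ℤ) - c + 1)).2
      have := (potS_mem hl k hk ((n : ℤ) - c)).1
      simp only [hs]; linarith
    have hsi : Integrable s (ν.map w) :=
      integrable_bdd_comp _ s (measurable_of_countable _) (SteinC2 l k)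
        (fun n => by rw [abs_of_nonneg (hs0 n)]; exact hs1 n)
    have hsi' : Integrable (fun ω => s (w ω)) ν := hsi.comp_measurable hw
    calc ∫ ω, d2S l k ((w ω : ℤ) - c) ∂ν ≤ ∫ ω, s (w ω) ∂ν :=
          integral_mono hint hsi' (fun ω => (potS_step hl k hk _).2.1)
      _ = ∫ n, s n ∂(ν.map w) := by
          rw [integral_map hw.aemeasurable hsi.aestronglyMeasurable]
      _ = ∑' n, (ν.map w).real {n} • s n := integral_countable hsi
      _ ≤ SteinC2 l k * q := by
          apply Real.tsum_le_of_sum_range_le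
          · intro n; exact mul_nonneg measureReal_nonneg (hs0 n)
          · intro N
            calc ∑ n ∈ range N, (ν.map w).real {n} • s n
                ≤ ∑ n ∈ range N, q * s n := by
                  apply Finset.sum_le_sum
                  intro n _
                  rw [map_measureReal_apply hw (measurableSet_singleton _)]
                  exact mul_le_mul_of_nonneg_right (hq n) (hs0 n)
              _ = q * (potS l k ((N : ℤ) - c) - potS l k ((0 : ℤ) - c)) := by
                  rw [← Finset.mul_sum]
                  congr 1
                  have := Finset.sum_range_sub (fun n : ℕ => potS l k ((n : ℤ) - c)) N
                  simp only [Nat.cast_zero] at this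
                  rw [← this]
                  apply Finset.sum_congr rfl
                  intro n _
                  simp only [hs]
                  congr 2
                  push_cast; ring
              _ ≤ SteinC2 l k * q := by
                  have := (potS_mem hl k hk ((N : ℤ) - c)).2
                  have := (potS_mem hl k hk ((0 : ℤ) - c)).1
                  nlinarith

lemma abs_integral_le_of_fibers {Ω τ : Type*} [MeasurableSpace Ω] [MeasurableSpace τ]
    [Countable τ] [MeasurableSingletonClass τ] (P : Measure Ω) (T : Ω → τ) (hT : Measurable T)
    (H b : Ω → ℝ) (hH : Integrable H P) (hb : Integrable b P)
    (h : ∀ t, |∫ ω in T ⁻¹' {t}, H ω ∂P| ≤ ∫ ω in T ⁻¹' {t}, b ω ∂P) :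
    |∫ ω, H ω ∂P| ≤ ∫ ω, b ω ∂P := by
  have hU : (⋃ t, T ⁻¹' {t}) = Set.univ := by
    ext ω; simp
  have hd : Pairwise (Function.onFun Disjoint fun t => T ⁻¹' {t}) := by
    intro s t hst
    exact Disjoint.preimage _ (by simpa using hst)
  have s1 := hasSum_integral_iUnion (μ := P) (f := H) (fun t => hT (measurableSet_singleton t)) hd
    hH.integrableOn
  have s2 := hasSum_integral_iUnion (μ := P) (f := b) (fun t => hT (measurableSet_singleton t)) hd
    hb.integrableOn
  rw [hU] at s1 s2
  simp only [Measure.restrict_univ] at s1 s2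
  rw [abs_le]
  constructor
  · have := hasSum_le (fun t => neg_le_of_abs_le (h t)) s2.neg s1
    exact this
  · exact hasSum_le (fun t => le_of_abs_le (h t)) s1 s2

lemma d1S_sub (l : ℝ) (k : ℕ) (x : ℤ) (r : ℕ) :
    d1S l k (x + r) - d1S l k x = ∑ m ∈ range r, d2S l k (x + m) := by
  have := Finset.sum_range_sub (fun n : ℕ => d1S l k (x + n)) r
  simp only [Nat.cast_zero, add_zero] at this
  rw [← this]
  apply Finset.sum_congr rfl
  intro n _
  unfold d1S d2S
  push_cast
  rw [show x + (n + 1 : ℤ) + 1 = x + n + 2 by ring, show x + (n + 1 : ℤ) = x + n + 1 by ring]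
  ring

/-- `g(x+r+s) - g(x+r) - s D(x)` as a double sum. -/
lemma gS_expand (l : ℝ) (k : ℕ) (x : ℤ) (r s : ℕ) :
    gS l k (x + r + s) - gS l k (x + r) - s * d1S l k x =
      ∑ i ∈ range s, ∑ m ∈ range (r + i), d2S l k (x + m) := by
  simp only [← d1S_sub]
  rw [Finset.sum_sub_distrib]
  simp only [Finset.sum_const, card_range, nsmul_eq_mul]
  congr 1
  have := Finset.sum_range_sub (fun n : ℕ => gS l k (x + r + n)) s
  simp only [Nat.cast_zero, add_zero] at this
  rw [← this]
  apply Finset.sum_congr rfl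
  intro n _
  unfold d1S
  push_cast
  rw [show x + r + (n + 1 : ℤ) = x + (r + n) + 1 by ring, show x + (r : ℤ) + n = x + (r + n) by ring]

lemma sum_range_affine (r s : ℕ) (C : ℝ) :
    ∑ i ∈ range s, ∑ _m ∈ range (r + i), C = C * (s * ((r + s : ℝ) - s / 2 - 1 / 2)) := by
  simp only [Finset.sum_const, card_range, nsmul_eq_mul]
  induction s with
  | zero => simp
  | succ s ih => rw [Finset.sum_range_succ, ih]; push_cast; ring

lemma local_term {Ω : Type*} [MeasurableSpace Ω] (P : Measure Ω) [IsProbabilityMeasure P]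
    (x z z' w : Ω → ℕ) (hx : Measurable x) (hz : Measurable z) (hz' : Measurable z')
    (hw : Measurable w) (hzz : ∀ ω, z ω ≤ z' ω) (hzw : ∀ ω, z' ω ≤ w ω)
    (hi1 : IndepFun x (fun ω => w ω - z ω) P)
    (hi2 : IndepFun (fun ω => (x ω, z ω)) (fun ω => w ω - z' ω) P)
    (m : ℝ) (hm : m = ∫ ω, (x ω : ℝ) ∂P) (hxi : Integrable (fun ω => (x ω : ℝ)) P)
    (hz'i : Integrable (fun ω => (z' ω : ℝ)) P)
    (hI1 : Integrable (fun ω => ((x ω : ℝ) - m) * z ω) P)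
    (hI2 : Integrable (fun ω => |(x ω : ℝ) - m| * z ω * ((z' ω : ℝ) - z ω / 2 - 1 / 2)) P)
    (θ : ℝ)
    (hθ : ∀ (t : ℕ × ℕ × ℕ) (n : ℕ), P.real (w ⁻¹' {n} ∩ (fun ω => (x ω, z ω, z' ω)) ⁻¹' {t})
      ≤ θ * P.real ((fun ω => (x ω, z ω, z' ω)) ⁻¹' {t}))
    {l : ℝ} (hl : 0 < l) (k : ℕ) (hk : 2 ≤ k) (a : ℤ) :
    |∫ ω, ((x ω : ℝ) - m) * gS l k ((w ω : ℤ) - a) ∂P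
      - (∫ ω, ((x ω : ℝ) - m) * z ω ∂P) * ∫ ω, d1S l k ((w ω : ℤ) - a) ∂P| ≤
    SteinC2 l k * (θ * (|∫ ω, ((x ω : ℝ) - m) * z ω ∂P| * ∫ ω, (z' ω : ℝ) ∂P +
      ∫ ω, |(x ω : ℝ) - m| * z ω * ((z' ω : ℝ) - z ω / 2 - 1 / 2) ∂P)) := by
  set T : Ω → ℕ × ℕ × ℕ := fun ω => (x ω, z ω, z' ω) with hTdef
  have hT : Measurable T := hx.prodMk (hz.prodMk hz')
  have hg_meas : ∀ (v : Ω → ℕ), Measurable v → Measurable (fun ω => gS l k ((v ω : ℤ) - a)) :=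
    fun v hv => (measurable_of_countable (fun n : ℕ => gS l k ((n : ℤ) - a))).comp hv
  have hd_meas : ∀ (v : Ω → ℕ), Measurable v → Measurable (fun ω => d1S l k ((v ω : ℤ) - a)) :=
    fun v hv => (measurable_of_countable (fun n : ℕ => d1S l k ((n : ℤ) - a))).comp hv
  have hd_int : ∀ (v : Ω → ℕ), Measurable v → Integrable (fun ω => d1S l k ((v ω : ℤ) - a)) P :=
    fun v hv => integrable_bdd_comp P _ (hd_meas v hv) _ (fun ω => gS_C1 hl k hk _)
  have hxm : Integrable (fun ω => (x ω : ℝ) - m) P := hxi.sub (integrable_const _)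
  have hg_int : ∀ (v : Ω → ℕ), Measurable v →
      Integrable (fun ω => ((x ω : ℝ) - m) * gS l k ((v ω : ℤ) - a)) P :=
    fun v hv => hxm.mul_bdd (c := gS l k k) (hg_meas v hv).aestronglyMeasurable
      (Filter.Eventually.of_forall fun ω => gS_abs hl k hk _)
  have hwz : Measurable (fun ω => w ω - z ω) := hw.sub hz
  have hwz' : Measurable (fun ω => w ω - z' ω) := hw.sub hz'
  have hprod_int : Integrable
      (fun ω => ((x ω : ℝ) - m) * z ω * d1S l k (((w ω - z' ω : ℕ) : ℤ) - a)) P :=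
    hI1.mul_bdd (c := SteinC1 l k) (hd_meas _ hwz').aestronglyMeasurable
      (Filter.Eventually.of_forall fun ω => gS_C1 hl k hk _)
  have E1 : ∫ ω, ((x ω : ℝ) - m) * gS l k (((w ω - z ω : ℕ) : ℤ) - a) ∂P = 0 := by
    have hh := (hi1.comp (φ := fun n : ℕ => (n : ℝ) - m) (ψ := fun n : ℕ => gS l k ((n : ℤ) - a))
      (measurable_of_countable _) (measurable_of_countable _)).integral_mul_eq_mul_integral
      hxm.aestronglyMeasurable (hg_meas _ hwz).aestronglyMeasurable
    have h0 : ∫ ω, ((x ω : ℝ) - m) ∂P = 0 := by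
      rw [integral_sub hxi (integrable_const _), ← hm]; simp
    simp only [Function.comp_def] at hh
    rw [h0, zero_mul] at hh
    exact hh
  have E2 : ∫ ω, ((x ω : ℝ) - m) * z ω * d1S l k (((w ω - z' ω : ℕ) : ℤ) - a) ∂P =
      (∫ ω, ((x ω : ℝ) - m) * z ω ∂P) * ∫ ω, d1S l k (((w ω - z' ω : ℕ) : ℤ) - a) ∂P :=
    (hi2.comp (φ := fun p : ℕ × ℕ => ((p.1 : ℝ) - m) * p.2)
      (ψ := fun n : ℕ => d1S l k ((n : ℤ) - a))
      (measurable_of_countable _) (measurable_of_countable _)).integral_mul_eq_mul_integral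
      hI1.aestronglyMeasurable (hd_meas _ hwz').aestronglyMeasurable
  -- basic bound on each fibre
  have hfib : ∀ (t : ℕ × ℕ × ℕ) (c : ℤ), |∫ ω in T ⁻¹' {t}, d2S l k ((w ω : ℤ) - c) ∂P| ≤
      SteinC2 l k * (θ * P.real (T ⁻¹' {t})) := by
    intro t c
    apply integral_d2S_le _ w hw _ _ hl k hk c
    intro n
    rw [measureReal_restrict_apply (hw (measurableSet_singleton _))]
    exact hθ t n
  have hfib_int : ∀ (t : ℕ × ℕ × ℕ) (c : ℤ),
      Integrable (fun ω => d2S l k ((w ω : ℤ) - c)) (P.restrict (T ⁻¹' {t})) := fun t c =>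
    integrable_bdd_comp _ _ ((measurable_of_countable (fun n : ℕ => d2S l k ((n : ℤ) - c))).comp hw)
      _ (fun ω => d2S_abs hl k hk _)
  have R1 : |∫ ω, (d1S l k ((w ω : ℤ) - a) - d1S l k (((w ω - z' ω : ℕ) : ℤ) - a)) ∂P| ≤
      ∫ ω, SteinC2 l k * θ * (z' ω : ℝ) ∂P := by
    apply abs_integral_le_of_fibers P T hT _ _ ((hd_int w hw).sub (hd_int _ hwz'))
      (hz'i.const_mul _)
    rintro ⟨x0, z0, z0'⟩
    have hE := hT (measurableSet_singleton (x0, z0, z0'))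
    have e1 : ∫ ω in T ⁻¹' {(x0, z0, z0')},
        (d1S l k ((w ω : ℤ) - a) - d1S l k (((w ω - z' ω : ℕ) : ℤ) - a)) ∂P =
        ∫ ω in T ⁻¹' {(x0, z0, z0')}, ∑ i ∈ range z0', d2S l k ((w ω : ℤ) - (a + z0' - i)) ∂P := by
      apply setIntegral_congr_fun hE
      intro ω hω
      simp only [hTdef, Set.mem_preimage, Set.mem_singleton_iff, Prod.mk.injEq] at hω
      obtain ⟨h1, h2, h3⟩ := hω
      have := hzw ω
      have hh := d1S_sub l k (((w ω - z' ω : ℕ) : ℤ) - a) z0'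
      rw [show ((w ω - z' ω : ℕ) : ℤ) - a + z0' = w ω - a by omega] at hh
      simp only
      rw [hh]
      apply Finset.sum_congr rfl
      intro i _
      congr 1
      omega
    have e2 : ∫ ω in T ⁻¹' {(x0, z0, z0')}, SteinC2 l k * θ * (z' ω : ℝ) ∂P =
        ∫ ω in T ⁻¹' {(x0, z0, z0')}, SteinC2 l k * θ * (z0' : ℝ) ∂P := by
      apply setIntegral_congr_fun hE
      intro ω hω
      simp only [hTdef, Set.mem_preimage, Set.mem_singleton_iff, Prod.mk.injEq] at hω
      simp only [hω.2.2]
    simp only [Pi.sub_apply]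
    rw [e1, e2, integral_finsetSum _ (fun i _ => hfib_int _ _), setIntegral_const]
    refine (Finset.abs_sum_le_sum_abs _ _).trans ?_
    refine (Finset.sum_le_sum (fun i _ => hfib _ _)).trans (le_of_eq ?_)
    simp only [Finset.sum_const, card_range, nsmul_eq_mul, smul_eq_mul]
    ring
  have R2 : |∫ ω, ((x ω : ℝ) - m) * (gS l k ((w ω : ℤ) - a) - gS l k (((w ω - z ω : ℕ) : ℤ) - a)
      - z ω * d1S l k (((w ω - z' ω : ℕ) : ℤ) - a)) ∂P| ≤
      ∫ ω, SteinC2 l k * θ * (|(x ω : ℝ) - m| * z ω * ((z' ω : ℝ) - z ω / 2 - 1 / 2)) ∂P := by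
    apply abs_integral_le_of_fibers P T hT _ _ _ (hI2.const_mul _)
    · rintro ⟨x0, z0, z0'⟩
      have hE := hT (measurableSet_singleton (x0, z0, z0'))
      by_cases hle : z0 ≤ z0'
      swap
      · have : T ⁻¹' {(x0, z0, z0')} = ∅ := by
          ext ω
          simp only [hTdef, Set.mem_preimage, Set.mem_singleton_iff, Prod.mk.injEq,
            Set.mem_empty_iff_false, iff_false]
          rintro ⟨_, h2, h3⟩
          have := hzz ω
          omega
        rw [this]; simp
      obtain ⟨r, rfl⟩ := Nat.exists_eq_add_of_le hle
      have e1 : ∫ ω in T ⁻¹' {(x0, z0, z0 + r)},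
          ((x ω : ℝ) - m) * (gS l k ((w ω : ℤ) - a) - gS l k (((w ω - z ω : ℕ) : ℤ) - a)
            - z ω * d1S l k (((w ω - z' ω : ℕ) : ℤ) - a)) ∂P =
          ∫ ω in T ⁻¹' {(x0, z0, z0 + r)}, ((x0 : ℝ) - m) * 
            ∑ i ∈ range z0, ∑ j ∈ range (r + i), d2S l k ((w ω : ℤ) - (a + z0 + r - j)) ∂P := by
        apply setIntegral_congr_fun hE
        intro ω hω
        simp only [hTdef, Set.mem_preimage, Set.mem_singleton_iff, Prod.mk.injEq] at hω
        obtain ⟨h1, h2, h3⟩ := hω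
        have := hzw ω
        have hh := gS_expand l k (((w ω - z' ω : ℕ) : ℤ) - a) r z0
        rw [show ((w ω - z' ω : ℕ) : ℤ) - a + r + z0 = w ω - a by omega,
          show ((w ω - z' ω : ℕ) : ℤ) - a + r = ((w ω - z ω : ℕ) : ℤ) - a by omega] at hh
        simp only
        rw [h1, h2] 
        rw [h2] at hh
        rw [hh]
        congr 1
        apply Finset.sum_congr rfl
        intro i _
        apply Finset.sum_congr rfl
        intro j _
        congr 1
        omega
      have e2 : ∫ ω in T ⁻¹' {(x0, z0, z0 + r)},
            SteinC2 l k * θ * (|(x ω : ℝ) - m| * z ω * ((z' ω : ℝ) - z ω / 2 - 1 / 2)) ∂P =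
          ∫ ω in T ⁻¹' {(x0, z0, z0 + r)},
            SteinC2 l k * θ * (|(x0 : ℝ) - m| * z0 * (((z0 + r : ℕ) : ℝ) - z0 / 2 - 1 / 2)) ∂P := by
        apply setIntegral_congr_fun hE
        intro ω hω
        simp only [hTdef, Set.mem_preimage, Set.mem_singleton_iff, Prod.mk.injEq] at hω
        simp only [hω.2.2, hω.1, hω.2.1]
      rw [e1, e2, integral_const_mul, abs_mul, integral_finsetSum _
        (fun i _ => integrable_finsetSum _ (fun j _ => hfib_int _ _)), setIntegral_const]
      have b1 : |∑ i ∈ range z0, ∫ ω in T ⁻¹' {(x0, z0, z0 + r)},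
          ∑ j ∈ range (r + i), d2S l k ((w ω : ℤ) - (a + z0 + r - j)) ∂P| ≤
          ∑ i ∈ range z0, ∑ _j ∈ range (r + i),
            SteinC2 l k * (θ * P.real (T ⁻¹' {(x0, z0, z0 + r)})) := by
        refine (Finset.abs_sum_le_sum_abs _ _).trans (Finset.sum_le_sum fun i _ => ?_)
        rw [integral_finsetSum _ (fun j _ => hfib_int _ _)]
        refine (Finset.abs_sum_le_sum_abs _ _).trans (Finset.sum_le_sum fun j _ => hfib _ _)
      rw [sum_range_affine] at b1
      refine (mul_le_mul_of_nonneg_left b1 (abs_nonneg _)).trans (le_of_eq ?_)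
      simp only [smul_eq_mul]
      push_cast; ring
    · have := ((hg_int w hw).sub (hg_int _ hwz)).sub hprod_int
      refine this.congr (Filter.Eventually.of_forall fun ω => ?_)
      simp only [Pi.sub_apply]; ring
  rw [integral_const_mul] at R1 R2
  rw [integral_sub (hd_int w hw) (hd_int _ hwz')] at R1
  have e3 : ∫ ω, ((x ω : ℝ) - m) * (gS l k ((w ω : ℤ) - a) - gS l k (((w ω - z ω : ℕ) : ℤ) - a)
      - z ω * d1S l k (((w ω - z' ω : ℕ) : ℤ) - a)) ∂P =
      ∫ ω, ((x ω : ℝ) - m) * gS l k ((w ω : ℤ) - a) ∂P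
      - (∫ ω, ((x ω : ℝ) - m) * z ω ∂P) * ∫ ω, d1S l k (((w ω - z' ω : ℕ) : ℤ) - a) ∂P := by
    have h1 := integral_sub ((hg_int w hw).sub (hg_int _ hwz)) hprod_int
    have h2 := integral_sub (hg_int w hw) (hg_int _ hwz)
    simp only [Pi.sub_apply] at h1
    rw [h2, E1, sub_zero, E2] at h1
    rw [← h1]
    congr 1; ext ω; ring
  rw [e3] at R2
  set c := ∫ ω, ((x ω : ℝ) - m) * z ω ∂P
  set G := ∫ ω, ((x ω : ℝ) - m) * gS l k ((w ω : ℤ) - a) ∂P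
  set D := ∫ ω, d1S l k ((w ω : ℤ) - a) ∂P
  set D' := ∫ ω, d1S l k (((w ω - z' ω : ℕ) : ℤ) - a) ∂P
  calc |G - c * D| = |(G - c * D') - c * (D - D')| := by congr 1; ring
    _ ≤ |G - c * D'| + |c * (D - D')| := abs_sub _ _
    _ ≤ _ := by
      rw [abs_mul]
      have := mul_le_mul_of_nonneg_left R1 (abs_nonneg c)
      linarith

/-- Theorem 1: moderate deviations in Poisson approximation under the local
dependence structure (LD2). -/
theorem poisson_md_local_dependence {Ω : Type*} [mΩ : MeasurableSpace Ω]
    (P : Measure Ω) [IsProbabilityMeasure P]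
    {I : Type*} [Fintype I] [DecidableEq I]
    (X : I → Ω → ℕ) (hXmeas : ∀ i, Measurable (X i))
    (A B : I → Finset I) (hiA : ∀ i, i ∈ A i) (hAB : ∀ i, A i ⊆ B i)
    -- (LD2): `X i` is independent of `{X j : j ∉ A i}` and
    -- `{X j : j ∈ A i}` is independent of `{X j : j ∉ B i}`.
    (hLD2a : ∀ i, IndepFun (X i) (fun ω => fun j : {j : I // j ∉ A i} => X j.1 ω) P)
    (hLD2b : ∀ i, IndepFun (fun ω => fun j : {j : I // j ∈ A i} => X j.1 ω)
      (fun ω => fun j : {j : I // j ∉ B i} => X j.1 ω) P)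
    (W : Ω → ℕ) (hW : W = fun ω => ∑ i, X i ω)
    (μi : I → ℝ) (hμi : ∀ i, μi i = ∫ ω, (X i ω : ℝ) ∂P)
    (μ σ2 : ℝ) (hμ : μ = ∫ ω, (W ω : ℝ) ∂P) (hσ : σ2 = ∫ ω, ((W ω : ℝ) - μ) ^ 2 ∂P)
    (hXint : ∀ i, Integrable (fun ω => (X i ω : ℝ)) P)
    (hW2int : Integrable (fun ω => (W ω : ℝ) ^ 2) P)
    (hI1 : ∀ i, Integrable (fun ω =>
      ((X i ω : ℝ) - μi i) * ∑ j ∈ A i, (X j ω : ℝ)) P)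
    (hI2 : ∀ i, Integrable (fun ω =>
      |(X i ω : ℝ) - μi i| * (∑ j ∈ A i, (X j ω : ℝ)) *
        ((∑ j ∈ B i, (X j ω : ℝ)) - (∑ j ∈ A i, (X j ω : ℝ)) / 2 - 1 / 2)) P)
    -- For each `i`, a σ-algebra making `{X j : j ∈ B i}` measurable.
    (F : I → MeasurableSpace Ω) (hFle : ∀ i, F i ≤ mΩ)
    (hFmeas : ∀ i, ∀ j ∈ B i, Measurable[F i] (X j))
    (θ : I → ℝ) (hθ01 : ∀ i, θ i ∈ Set.Icc (0 : ℝ) 1)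
    (hθ : ∀ i, ∀ j : ℕ, ∀ᵐ ω ∂P,
      (P[Set.indicator {ω' | W ω' = j} (fun _ => (1 : ℝ)) | F i]) ω ≤ θ i)
    (a : ℤ) (ha : (a : ℝ) < μ) (lam : ℝ) (hlam : lam = μ - a)
    (k : ℕ) (hk : 2 ≤ k) (hkl : lam < k) :
    |(P {ω | (k : ℤ) ≤ (W ω : ℤ) - a}).toReal / poissonTail lam k - 1| ≤
      SteinC2 lam k * (∑ i, θ i *
        (|∫ ω, ((X i ω : ℝ) - μi i) * ∑ j ∈ A i, (X j ω : ℝ) ∂P| *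
            (∫ ω, ∑ j ∈ B i, (X j ω : ℝ) ∂P)
          + ∫ ω, |(X i ω : ℝ) - μi i| * (∑ j ∈ A i, (X j ω : ℝ)) *
              ((∑ j ∈ B i, (X j ω : ℝ)) - (∑ j ∈ A i, (X j ω : ℝ)) / 2 - 1 / 2) ∂P))
        + SteinC1 lam k * |lam - σ2|
        + (P {ω | (W ω : ℤ) - a ≤ -2}).toReal := by
  subst hW
  have hlpos : 0 < lam := by rw [hlam]; linarith
  set w : Ω → ℕ := fun ω => ∑ i, X i ω with hw_def
  have hwm : Measurable w := Finset.measurable_fun_sum _ (fun i _ => hXmeas i)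
  set z : I → Ω → ℕ := fun i ω => ∑ j ∈ A i, X j ω with hz_def
  set z' : I → Ω → ℕ := fun i ω => ∑ j ∈ B i, X j ω with hz'_def
  have hzm : ∀ i, Measurable (z i) := fun i => Finset.measurable_fun_sum _ (fun j _ => hXmeas j)
  have hz'm : ∀ i, Measurable (z' i) := fun i => Finset.measurable_fun_sum _ (fun j _ => hXmeas j)
  have hzz : ∀ i ω, z i ω ≤ z' i ω := fun i ω =>
    Finset.sum_le_sum_of_subset (hAB i)
  have hz'w : ∀ i ω, z' i ω ≤ w ω := fun i ω =>
    Finset.sum_le_sum_of_subset (Finset.subset_univ _)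
  have hcompl : ∀ (S : Finset I) ω, w ω - ∑ j ∈ S, X j ω = ∑ j : {j : I // j ∉ S}, X j.1 ω := by
    intro S ω
    have h1 : w ω = ∑ j ∈ S, X j ω + ∑ j ∈ Sᶜ, X j ω := (Finset.sum_add_sum_compl S _).symm
    have h2 : ∑ j ∈ Sᶜ, X j ω = ∑ j : {j : I // j ∉ S}, X j.1 ω :=
      Finset.sum_subtype _ (by simp) _
    omega
  have hi1 : ∀ i, IndepFun (X i) (fun ω => w ω - z i ω) P := by
    intro i
    have e : (fun ω => w ω - z i ω) =
        (fun v : {j : I // j ∉ A i} → ℕ => ∑ j, v j) ∘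
          (fun ω => fun j : {j : I // j ∉ A i} => X j.1 ω) := by
      ext ω; exact hcompl (A i) ω
    rw [e]
    exact (hLD2a i).comp (φ := id) measurable_id
      (Finset.measurable_fun_sum _ (fun j _ => measurable_pi_apply j))
  have hi2 : ∀ i, IndepFun (fun ω => (X i ω, z i ω)) (fun ω => w ω - z' i ω) P := by
    intro i
    have e : (fun ω => w ω - z' i ω) =
        (fun v : {j : I // j ∉ B i} → ℕ => ∑ j, v j) ∘
          (fun ω => fun j : {j : I // j ∉ B i} => X j.1 ω) := by
      ext ω; exact hcompl (B i) ω
    have e' : (fun ω => (X i ω, z i ω)) =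
        (fun v : {j : I // j ∈ A i} → ℕ => (v ⟨i, hiA i⟩, ∑ j, v j)) ∘
          (fun ω => fun j : {j : I // j ∈ A i} => X j.1 ω) := by
      funext ω
      have : z i ω = ∑ j : {j : I // j ∈ A i}, X j.1 ω := Finset.sum_subtype _ (by simp) _
      simp only [Function.comp, this]
    rw [e, e']
    exact (hLD2b i).comp ((measurable_pi_apply _).prodMk
        (Finset.measurable_fun_sum _ (fun j _ => measurable_pi_apply j)))
      (Finset.measurable_fun_sum _ (fun j _ => measurable_pi_apply j))
  have hFcond : ∀ i, ∀ (t : ℕ × ℕ × ℕ) (n : ℕ),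
      P.real (w ⁻¹' {n} ∩ (fun ω => (X i ω, z i ω, z' i ω)) ⁻¹' {t})
      ≤ θ i * P.real ((fun ω => (X i ω, z i ω, z' i ω)) ⁻¹' {t}) := by
    intro i t n
    have hTm : Measurable[F i] (fun ω => (X i ω, z i ω, z' i ω)) :=
      (hFmeas i i (hAB i (hiA i))).prodMk
        ((Finset.measurable_fun_sum _ (fun j hj => hFmeas i j (hAB i hj))).prodMk
          (Finset.measurable_fun_sum _ (fun j hj => hFmeas i j hj)))
    have hE : MeasurableSet[F i] ((fun ω => (X i ω, z i ω, z' i ω)) ⁻¹' {t}) :=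
      hTm (measurableSet_singleton t)
    set E := (fun ω => (X i ω, z i ω, z' i ω)) ⁻¹' {t}
    have hwn : MeasurableSet (w ⁻¹' {n}) := hwm (measurableSet_singleton n)
    have hint : Integrable (Set.indicator {ω' | w ω' = n} (fun _ => (1 : ℝ))) P :=
      (integrable_const _).indicator hwn
    have h1 := setIntegral_condExp (hFle i) hint hE
    have h2 : ∫ ω in E, Set.indicator {ω' | w ω' = n} (fun _ => (1 : ℝ)) ω ∂P =
        P.real (w ⁻¹' {n} ∩ E) := by
      have := integral_indicator_const (μ := P.restrict E) (1 : ℝ) hwn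
      rw [measureReal_restrict_apply hwn, smul_eq_mul, mul_one] at this
      exact this
    rw [← h2, ← h1]
    calc _ ≤ ∫ ω in E, θ i ∂P := by
          apply setIntegral_mono_ae integrable_condExp.integrableOn
            (integrable_const _).integrableOn (hθ i n)
      _ = θ i * P.real E := by
          rw [setIntegral_const, smul_eq_mul, mul_comm]
  have hwint : Integrable (fun ω => (w ω : ℝ)) P := by
    have : (fun ω => (w ω : ℝ)) = fun ω => ∑ i, (X i ω : ℝ) := by
      ext ω; simp [hw_def]
    rw [this]
    exact integrable_finsetSum _ (fun i _ => hXint i)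
  have hz'int : ∀ i, Integrable (fun ω => (z' i ω : ℝ)) P := by
    intro i
    have : (fun ω => (z' i ω : ℝ)) = fun ω => ∑ j ∈ B i, (X j ω : ℝ) := by
      ext ω; simp [hz'_def]
    rw [this]
    exact integrable_finsetSum _ (fun i _ => hXint i)
  have hzc : ∀ i ω, ∑ j ∈ A i, (X j ω : ℝ) = (z i ω : ℝ) := fun i ω => by simp [hz_def]
  have hz'c : ∀ i ω, ∑ j ∈ B i, (X j ω : ℝ) = (z' i ω : ℝ) := fun i ω => by simp [hz'_def]
  simp only [hzc, hz'c] at hI1 hI2 ⊢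
  -- the per-index estimates
  have hterm := fun i => local_term P (X i) (z i) (z' i) w (hXmeas i) (hzm i) (hz'm i) hwm
    (hzz i) (hz'w i) (hi1 i) (hi2 i) (μi i) (hμi i) (hXint i) (hz'int i) (hI1 i) (hI2 i) (θ i)
    (hFcond i) hlpos k hk a
  set c : I → ℝ := fun i => ∫ ω, ((X i ω : ℝ) - μi i) * z i ω ∂P with hc
  set D := ∫ ω, d1S lam k ((w ω : ℤ) - a) ∂P with hD
  set G : I → ℝ := fun i => ∫ ω, ((X i ω : ℝ) - μi i) * gS lam k ((w ω : ℤ) - a) ∂P with hG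
  have hgm : Measurable (fun ω => gS lam k ((w ω : ℤ) - a)) :=
    (measurable_of_countable (fun n : ℕ => gS lam k ((n : ℤ) - a))).comp hwm
  have hdm : Measurable (fun ω => d1S lam k ((w ω : ℤ) - a)) :=
    (measurable_of_countable (fun n : ℕ => d1S lam k ((n : ℤ) - a))).comp hwm
  have hdi : Integrable (fun ω => d1S lam k ((w ω : ℤ) - a)) P :=
    integrable_bdd_comp P _ hdm _ (fun ω => gS_C1 hlpos k hk _)
  have hXm : ∀ i, Integrable (fun ω => (X i ω : ℝ) - μi i) P :=
    fun i => (hXint i).sub (integrable_const _)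
  have hgi : ∀ i, Integrable (fun ω => ((X i ω : ℝ) - μi i) * gS lam k ((w ω : ℤ) - a)) P :=
    fun i => (hXm i).mul_bdd (c := gS lam k k) hgm.aestronglyMeasurable
      (Filter.Eventually.of_forall fun ω => gS_abs hlpos k hk _)
  have hμsum : μ = ∑ i, μi i := by
    rw [hμ]
    simp only [hμi]
    rw [← integral_finsetSum _ (fun i _ => hXint i)]
    congr 1; ext ω; simp [hw_def]
  have hwsum : ∀ ω, (w ω : ℝ) - μ = ∑ i, ((X i ω : ℝ) - μi i) := by
    intro ω
    rw [Finset.sum_sub_distrib, ← hμsum]; simp [hw_def]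
  have hXle : ∀ i ω, (X i ω : ℝ) ≤ w ω := by
    intro i ω
    have : X i ω ≤ w ω := Finset.single_le_sum (f := fun i => X i ω) (fun _ _ => Nat.zero_le _)
      (Finset.mem_univ i)
    exact_mod_cast this
  have hXw : ∀ i, Integrable (fun ω => ((X i ω : ℝ) - μi i) * w ω) P := by
    intro i
    have h1 : Integrable (fun ω => (X i ω : ℝ) * w ω) P := by
      refine hW2int.mono' ?_ (Filter.Eventually.of_forall fun ω => ?_)
      · exact ((hXint i).aestronglyMeasurable.mul hwint.aestronglyMeasurable)
      · have := hXle i ω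
        rw [Real.norm_of_nonneg (by positivity)]
        nlinarith [Nat.cast_nonneg (α := ℝ) (w ω)]
    refine (h1.sub (hwint.const_mul (μi i))).congr (Filter.Eventually.of_forall fun ω => ?_)
    simp only [Pi.sub_apply]; ring
  have hcw : ∀ i, c i = ∫ ω, ((X i ω : ℝ) - μi i) * w ω ∂P := by
    intro i
    have h0 : ∫ ω, ((X i ω : ℝ) - μi i) ∂P = 0 := by
      rw [integral_sub (hXint i) (integrable_const _), ← hμi]; simp
    have hh := ((hi1 i).comp (φ := fun n : ℕ => (n : ℝ) - μi i) (ψ := fun n : ℕ => (n : ℝ))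
      (measurable_of_countable _) (measurable_of_countable _)).integral_mul_eq_mul_integral
      (hXm i).aestronglyMeasurable
      ((measurable_of_countable (fun n : ℕ => (n : ℝ))).comp (hwm.sub (hzm i))).aestronglyMeasurable
    simp only [Function.comp_def] at hh
    rw [h0, zero_mul] at hh
    have hh' : ∫ ω, ((X i ω : ℝ) - μi i) * ((w ω - z i ω : ℕ) : ℝ) ∂P = 0 := hh
    have e : ∀ ω, ((X i ω : ℝ) - μi i) * ((w ω - z i ω : ℕ) : ℝ) =
        ((X i ω : ℝ) - μi i) * w ω - ((X i ω : ℝ) - μi i) * z i ω := by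
      intro ω
      rw [Nat.cast_sub ((hzz i ω).trans (hz'w i ω))]; ring
    simp only [e] at hh'
    rw [integral_sub (hXw i) (hI1 i)] at hh'
    simp only [hc]; linarith
  have hσsum : σ2 = ∑ i, c i := by
    simp only [hcw]
    rw [← integral_finsetSum _ (fun i _ => hXw i)]
    simp only [← Finset.sum_mul, ← hwsum]
    have i1 : Integrable (fun ω => ((w ω : ℝ) - μ) * w ω) P := by
      refine (hW2int.sub (hwint.const_mul μ)).congr (Filter.Eventually.of_forall fun ω => ?_)
      simp only [Pi.sub_apply]; ring
    have i2 : Integrable (fun ω => μ * ((w ω : ℝ) - μ)) P :=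
      (hwint.sub (integrable_const _)).const_mul _
    have h0 : ∫ ω, μ * ((w ω : ℝ) - μ) ∂P = 0 := by
      rw [integral_const_mul, integral_sub hwint (integrable_const _), ← hμ]; simp
    rw [hσ, ← sub_zero (∫ ω, ((w ω : ℝ) - μ) * w ω ∂P), ← h0, ← integral_sub i1 i2]
    congr 1; ext ω; ring
  -- Stein identity
  have hTpos := poissonTail_pos hlpos k
  set p := poissonTail lam k
  have hSk : MeasurableSet {ω | (k : ℤ) ≤ (w ω : ℤ) - a} :=
    hwm (MeasurableSet.of_discrete : MeasurableSet {n : ℕ | (k : ℤ) ≤ (n : ℤ) - a})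
  have hS2 : MeasurableSet {ω | (w ω : ℤ) - a ≤ -2} :=
    hwm (MeasurableSet.of_discrete : MeasurableSet {n : ℕ | (n : ℤ) - a ≤ -2})
  set L : Ω → ℝ := fun ω => lam * d1S lam k ((w ω : ℤ) - a)
    - ∑ i, ((X i ω : ℝ) - μi i) * gS lam k ((w ω : ℤ) - a) with hL
  have hLint : Integrable L P := (hdi.const_mul lam).sub (integrable_finsetSum _ (fun i _ => hgi i))
  have hLval : ∫ ω, L ω ∂P = lam * D - ∑ i, G i := by
    simp only [hL]
    rw [integral_sub (hdi.const_mul lam) (integrable_finsetSum _ (fun i _ => hgi i)),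
      integral_const_mul, integral_finsetSum _ (fun i _ => hgi i)]
  have hLeq : ∀ ω, L ω = lam * gS lam k ((w ω : ℤ) - a + 1)
      - (((w ω : ℤ) - a : ℤ) : ℝ) * gS lam k ((w ω : ℤ) - a) := by
    intro ω
    simp only [hL, d1S]
    rw [← Finset.sum_mul, ← hwsum]
    push_cast
    rw [show μ = lam + a by linarith]
    ring
  set Q : Ω → ℝ := {ω | (k : ℤ) ≤ (w ω : ℤ) - a}.indicator (fun _ => 1 / p) with hQ
  have hQint : Integrable Q P := (integrable_const _).indicator hSk
  have hQval : ∫ ω, Q ω ∂P = P.real {ω | (k : ℤ) ≤ (w ω : ℤ) - a} / p := by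
    simp only [hQ]
    rw [integral_indicator_const _ hSk, smul_eq_mul, mul_one_div]
  have herr : |∫ ω, (L ω - (1 - Q ω)) ∂P| ≤ P.real {ω | (w ω : ℤ) - a ≤ -2} := by
    rw [← mul_one (P.real {ω | (w ω : ℤ) - a ≤ -2}), ← smul_eq_mul,
      ← integral_indicator_const _ hS2, ← Real.norm_eq_abs]
    apply norm_integral_le_of_norm_le ((integrable_const _).indicator hS2)
    refine Filter.Eventually.of_forall fun ω => ?_
    have h := gS_stein hlpos k hk ((w ω : ℤ) - a)
    rw [← hLeq] at h
    simp only [hQ, Set.indicator_apply, Set.mem_ofPred_eq, Real.norm_eq_abs]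
    exact h
  have i1Q : Integrable (fun ω => 1 - Q ω) P := (integrable_const _).sub hQint
  rw [integral_sub hLint i1Q, integral_sub (integrable_const _) hQint, hLval, hQval] at herr
  simp only [integral_const, probReal_univ, smul_eq_mul, mul_one] at herr
  have hDle : |D| ≤ SteinC1 lam k := by
    have := norm_integral_le_of_norm_le_const (μ := P) (C := SteinC1 lam k)
      (f := fun ω => d1S lam k ((w ω : ℤ) - a))
      (Filter.Eventually.of_forall fun ω => gS_C1 hlpos k hk _)
    simpa using this
  have hGsum : |∑ i, (G i - c i * D)| ≤ SteinC2 lam k * ∑ i, θ i *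
      (|c i| * ∫ ω, (z' i ω : ℝ) ∂P +
      ∫ ω, |(X i ω : ℝ) - μi i| * z i ω * ((z' i ω : ℝ) - z i ω / 2 - 1 / 2) ∂P) := by
    rw [Finset.mul_sum]
    exact (Finset.abs_sum_le_sum_abs _ _).trans (Finset.sum_le_sum fun i _ => hterm i)
  rw [Finset.sum_sub_distrib, ← Finset.sum_mul, ← hσsum] at hGsum
  have hfin : |(lam - σ2) * D| ≤ SteinC1 lam k * |lam - σ2| := by
    rw [abs_mul, mul_comm]
    exact mul_le_mul_of_nonneg_right hDle (abs_nonneg _)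
  change |P.real {ω | (k : ℤ) ≤ (w ω : ℤ) - a} / p - 1| ≤ _ + _ + P.real {ω | (w ω : ℤ) - a ≤ -2}
  set q := P.real {ω | (k : ℤ) ≤ (w ω : ℤ) - a} / p
  calc |q - 1| = |(lam * D - ∑ i, G i - (1 - q)) + (∑ i, G i - σ2 * D) - (lam - σ2) * D| := by
        congr 1; ring
    _ ≤ |lam * D - ∑ i, G i - (1 - q)| + |∑ i, G i - σ2 * D| + |(lam - σ2) * D| :=
        (abs_sub _ _).trans (add_le_add_left (abs_add_le _ _) _)
    _ ≤ _ := by linarith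
end

section
/- Let n ≥ 1, let π be a uniformly random permutation of {1,…,n}, and let W = #{j ∈ {1,…,n} : π(j) = j} be the number of fixed points of π. Then for every integer k ≥ 2, |P(W ≥ k)/F̄_1(k) − 1| ≤ (2/n)·C1(1,k). -/
open MeasureTheory ProbabilityTheory Finset Real

/-- partial sums of the exponential series at 1 -/
noncomputable def expPart (k : ℕ) : ℝ := ∑ i ∈ Finset.range k, (1 : ℝ) / (Nat.factorial i)

/-- probability of a derangement -/
noncomputable def derProb (m : ℕ) : ℝ := (numDerangements m : ℝ) / (Nat.factorial m)

lemma card_fixed_eq (n : ℕ) (s : Finset (Fin n)) :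
    (Finset.univ.filter (fun σ : Equiv.Perm (Fin n) =>
      (Finset.univ.filter fun j => σ j = j) = s)).card = numDerangements (n - s.card) := by
  classical
  have e := derangements.subtypeEquiv (fun a : Fin n => a ∉ s)
  have h1 := Fintype.card_congr e
  rw [card_derangements_eq_numDerangements] at h1
  have h2 : Fintype.card {a : Fin n // a ∉ s} = n - s.card := by
    rw [Fintype.card_subtype_compl]; simp
  rw [h2] at h1
  rw [h1, Fintype.card_subtype]
  congr 1
  ext σ
  simp only [Finset.mem_filter, Finset.mem_univ, true_and, Finset.ext_iff, not_not,
    Function.mem_fixedPoints, Function.IsFixedPt]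
  exact forall_congr' fun a => Iff.comm

lemma card_ge (n k : ℕ) :
    (Finset.univ.filter (fun σ : Equiv.Perm (Fin n) =>
      k ≤ (Finset.univ.filter fun j => σ j = j).card)).card
      = ∑ j ∈ Finset.Ico k (n + 1), n.choose j * numDerangements (n - j) := by
  classical
  have h := Finset.card_eq_sum_card_fiberwise
    (f := fun σ : Equiv.Perm (Fin n) => (Finset.univ.filter fun j => σ j = j))
    (s := Finset.univ.filter (fun σ : Equiv.Perm (Fin n) =>
      k ≤ (Finset.univ.filter fun j => σ j = j).card))
    (t := (Finset.univ : Finset (Fin n)).powerset) (by intro x _; simp)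
  rw [h]
  have h3 : ∀ s ∈ (Finset.univ : Finset (Fin n)).powerset,
      ((Finset.univ.filter (fun σ : Equiv.Perm (Fin n) =>
      k ≤ (Finset.univ.filter fun j => σ j = j).card)).filter
        (fun σ => (Finset.univ.filter fun j => σ j = j) = s)).card
      = (fun m => if k ≤ m then numDerangements (n - m) else 0) s.card := by
    intro s _
    by_cases hk : k ≤ s.card
    · simp only [hk, if_true]
      rw [← card_fixed_eq n s]
      congr 1
      ext σ
      simp only [Finset.mem_filter, Finset.mem_univ, true_and]
      constructor
      · exact fun h => h.2
      · intro h; exact ⟨by rw [h]; exact hk, h⟩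
    · simp only [hk, if_false]
      rw [Finset.card_eq_zero, Finset.filter_eq_empty_iff]
      intro σ hσ h
      simp only [Finset.mem_filter, Finset.mem_univ, true_and] at hσ
      rw [h] at hσ
      exact hk hσ
  rw [Finset.sum_congr rfl h3, Finset.sum_powerset_apply_card
    (fun m => if k ≤ m then numDerangements (n - m) else 0), Finset.card_univ, Fintype.card_fin]
  simp only [smul_eq_mul, mul_ite, mul_zero]
  rw [← Finset.sum_filter]
  apply Finset.sum_congr _ (fun _ _ => rfl)
  ext j
  simp only [Finset.mem_filter, Finset.mem_range, Finset.mem_Ico]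
  omega

lemma prob_formula (n : ℕ)
    [MeasurableSpace (Equiv.Perm (Fin n))] [MeasurableSingletonClass (Equiv.Perm (Fin n))]
    (k : ℕ) :
    ((PMF.uniformOfFintype (Equiv.Perm (Fin n))).toMeasure
      {σ | k ≤ Nat.card {j : Fin n // σ j = j}}).toReal
      = ∑ j ∈ Finset.Ico k (n + 1), derProb (n - j) / (Nat.factorial j) := by
  classical
  rw [PMF.toMeasure_uniformOfFintype_apply _ (Set.toFinite _).measurableSet]
  have h : Fintype.card {σ : Equiv.Perm (Fin n) | k ≤ Nat.card {j : Fin n // σ j = j}}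
      = ∑ j ∈ Finset.Ico k (n + 1), n.choose j * numDerangements (n - j) := by
    rw [← card_ge, ← Set.toFinset_card]
    congr 1
    ext σ
    simp [Nat.card_eq_fintype_card, Fintype.card_subtype]
  rw [h, Fintype.card_perm, Fintype.card_fin]
  rw [ENNReal.toReal_div]
  simp only [ENNReal.toReal_natCast]
  push_cast
  rw [Finset.sum_div]
  apply Finset.sum_congr rfl
  intro j hj
  have hj : j ≤ n := by have := Finset.mem_Ico.1 hj; omega
  rw [Nat.cast_choose ℝ hj]
  unfold derProb
  have := Nat.factorial_pos n
  have := Nat.factorial_pos j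
  have := Nat.factorial_pos (n - j)
  field_simp

lemma derProb_eq (n : ℕ) : derProb n = ∑ k ∈ Finset.range (n + 1), (-1 : ℝ) ^ k / k.factorial := by
  unfold derProb
  rw [← Int.cast_natCast, numDerangements_sum]
  push_cast
  rw [Finset.sum_div]
  refine Finset.sum_congr (refl _) ?_
  intro k hk
  have h_le : k ≤ n := Finset.mem_range_succ_iff.mp hk
  rw [Nat.ascFactorial_eq_div, add_tsub_cancel_of_le h_le]
  push_cast [Nat.factorial_dvd_factorial h_le]
  field

lemma derProb_nonneg (n : ℕ) : 0 ≤ derProb n := by unfold derProb; positivity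

lemma derProb_le_one (n : ℕ) : derProb n ≤ 1 := by
  unfold derProb
  rw [div_le_one (by positivity)]
  have h : numDerangements n ≤ n.factorial := by
    rw [← card_derangements_fin_eq_numDerangements]
    have := Fintype.card_subtype_le (fun f : Equiv.Perm (Fin n) => f ∈ derangements (Fin n))
    rw [Fintype.card_perm, Fintype.card_fin] at this
    exact this
  exact_mod_cast h

lemma bnd_aux (n : ℕ) : (((n + 1).succ : ℕ) : ℝ) / ((n + 1).factorial * ((n + 1 : ℕ) : ℝ))
    ≤ 2 / (n + 1).factorial := by
  rw [div_le_div_iff₀ (by positivity) (by positivity)]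
  push_cast
  have : (0 : ℝ) < (n + 1).factorial := by positivity
  have hn : (0 : ℝ) ≤ n := by positivity
  nlinarith

lemma derProb_approx (n : ℕ) : |derProb n - Real.exp (-1)| ≤ 2 / (n + 1).factorial := by
  have h := Real.exp_bound (x := -1) (by simp) (n := n + 1) (by omega)
  rw [abs_sub_comm, derProb_eq]
  refine h.trans ?_
  simp only [abs_neg, abs_one, one_pow, one_mul]
  exact bnd_aux n

lemma expPart_approx (n : ℕ) : |Real.exp 1 - expPart (n + 1)| ≤ 2 / (n + 1).factorial := by
  have h := Real.exp_bound (x := 1) (by simp) (n := n + 1) (by omega)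
  simp only [abs_one, one_pow, one_mul] at h
  exact h.trans (bnd_aux n)

lemma expPart_le (n : ℕ) : expPart n ≤ Real.exp 1 := by
  have := Real.sum_le_exp_of_nonneg (x := 1) (by norm_num) n
  simpa [expPart] using this

lemma poissonPMF_one (j : ℕ) : _root_.poissonPMF 1 j = Real.exp (-1) * (1 / j.factorial) := by
  simp [_root_.poissonPMF]; ring

lemma poissonCDF_one (j : ℕ) : poissonCDF 1 j = Real.exp (-1) * expPart (j + 1) := by
  unfold poissonCDF expPart
  rw [Finset.mul_sum]
  exact Finset.sum_congr rfl fun i _ => poissonPMF_one i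

lemma tail_eq (k : ℕ) : poissonTail 1 k = Real.exp (-1) * (Real.exp 1 - expPart k) := by
  have h : HasSum (fun n : ℕ => (1 : ℝ) / n.factorial) (Real.exp 1) := by
    have := NormedSpace.expSeries_div_hasSum_exp (1 : ℝ)
    rw [← Real.exp_eq_exp_ℝ] at this
    simpa using this
  have h2 := h.summable.sum_add_tsum_nat_add k
  rw [h.tsum_eq] at h2
  unfold poissonTail
  simp_rw [poissonPMF_one]
  rw [tsum_mul_left]
  congr 1
  unfold expPart
  rw [← h2]
  simp [add_comm]

lemma expPart_succ (k : ℕ) : expPart (k + 1) = expPart k + 1 / k.factorial := by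
  unfold expPart; rw [Finset.sum_range_succ]

lemma tail_ge (k : ℕ) : Real.exp (-1) / k.factorial ≤ poissonTail 1 k := by
  rw [tail_eq, div_eq_mul_one_div]
  have := expPart_le (k + 1)
  rw [expPart_succ] at this
  exact mul_le_mul_of_nonneg_left (by linarith) (Real.exp_pos _).le

lemma expPart_mono {a b : ℕ} (h : a ≤ b) : expPart a ≤ expPart b := by
  unfold expPart
  exact Finset.sum_le_sum_of_subset_of_nonneg (Finset.range_mono h) (fun _ _ _ => by positivity)

/-- lower bound for `C1` -/
lemma C1_ge (m : ℕ) :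
    (m + 1).factorial * (expPart (m + 2) - expPart (m + 1) / (m + 1)) ≤ SteinC1 1 (m + 2) := by
  have hS : 0 < expPart (m + 2) := by
    have := expPart_mono (show 1 ≤ m + 2 by omega)
    have h1 : expPart 1 = 1 := by simp [expPart]
    linarith
  have h0 : SteinC0 1 (m + 2) = (m + 1).factorial * expPart (m + 2) := by
    unfold SteinC0
    rw [poissonCDF_one, poissonPMF_one, show m + 2 - 1 + 1 = m + 2 from rfl,
      Nat.factorial_succ (m + 1)]
    have := Real.exp_pos (-1)
    have : ((m + 1).factorial : ℝ) ≠ 0 := by positivity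
    push_cast
    field_simp
    ring
  unfold SteinC1
  rw [h0, poissonCDF_one, poissonCDF_one, show m + 2 - 1 + 1 = m + 2 from rfl,
    show m + 2 - 2 + 1 = m + 1 from rfl]
  have hm := min_le_left (Real.exp (-1) * expPart (m + 1) * 1 /
    ((((m + 2 : ℕ) : ℝ) - 1) * (Real.exp (-1) * expPart (m + 2))))
    (poissonTail 1 (m + 2 + 1) * ((m + 2 : ℕ) : ℝ) / (poissonTail 1 (m + 2) * 1))
  have hpos : (0 : ℝ) ≤ (m + 1).factorial * expPart (m + 2) := by positivity
  refine le_trans (le_of_eq ?_) (mul_le_mul_of_nonneg_left (sub_le_sub_left hm 1) hpos)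
  have := Real.exp_pos (-1)
  have h3 : (((m + 2 : ℕ) : ℝ) - 1) = m + 1 := by push_cast; ring
  rw [h3]
  field_simp

lemma C1_two : 1 ≤ SteinC1 1 2 := by
  have := C1_ge 0
  norm_num [expPart, Finset.sum_range_succ] at this
  exact this

lemma C1_big (k : ℕ) (hk : 3 ≤ k) : 3 / 2 * ((k - 1).factorial : ℝ) ≤ SteinC1 1 k := by
  obtain ⟨m, rfl⟩ : ∃ m, k = m + 2 := ⟨k - 2, by omega⟩
  refine le_trans ?_ (C1_ge m)
  rw [show m + 2 - 1 = m + 1 from rfl, mul_comm]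
  apply mul_le_mul_of_nonneg_left _ (by positivity)
  rcases (show m = 1 ∨ 2 ≤ m by omega) with rfl | h
  · norm_num [expPart, Finset.sum_range_succ, Nat.factorial]
  · have h1 := expPart_mono (show 3 ≤ m + 1 by omega)
    have h2 := expPart_mono (show m + 1 ≤ m + 2 by omega)
    have h3 : expPart 3 = 5 / 2 := by norm_num [expPart, Finset.sum_range_succ, Nat.factorial]
    have h4 : expPart (m + 1) / (m + 1) ≤ expPart (m + 1) / 3 := by
      apply div_le_div_of_nonneg_left (by linarith) (by norm_num)
      have : (2 : ℝ) ≤ m := by exact_mod_cast h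
      linarith
    linarith

/-- the upper tail of the number of fixed points -/
noncomputable def fixTail (n k : ℕ) : ℝ :=
  ∑ j ∈ Finset.Ico k (n + 1), derProb (n - j) / (Nat.factorial j)

lemma fixTail_nonneg (n k : ℕ) : 0 ≤ fixTail n k :=
  Finset.sum_nonneg fun _ _ => div_nonneg (derProb_nonneg _) (by positivity)

lemma fixTail_le (n k : ℕ) : fixTail n k ≤ Real.exp 1 * poissonTail 1 k := by
  have h : Real.exp 1 * poissonTail 1 k = Real.exp 1 - expPart k := by
    rw [tail_eq, ← mul_assoc, ← Real.exp_add]; simp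
  rw [h]
  rcases le_or_gt k (n + 1) with hk | hk
  · have h1 : fixTail n k ≤ ∑ j ∈ Finset.Ico k (n + 1), (1 : ℝ) / (Nat.factorial j) :=
      Finset.sum_le_sum fun j _ => div_le_div_of_nonneg_right (derProb_le_one _) (by positivity)
    rw [Finset.sum_Ico_eq_sub _ hk] at h1
    have := expPart_le (n + 1)
    unfold expPart at *
    linarith
  · have : fixTail n k = 0 := by unfold fixTail; rw [Finset.Ico_eq_empty (by omega)]; simp
    rw [this]; linarith [expPart_le k]

lemma fixTail_approx (n k : ℕ) (hk : k ≤ n + 1) :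
    |fixTail n k - poissonTail 1 k| ≤ (2 ^ (n + 2) + 2) / (n + 1).factorial := by
  have hT : poissonTail 1 k = ∑ j ∈ Finset.Ico k (n + 1), Real.exp (-1) / (Nat.factorial j)
      + Real.exp (-1) * (Real.exp 1 - expPart (n + 1)) := by
    have : ∑ j ∈ Finset.Ico k (n + 1), Real.exp (-1) / (Nat.factorial j)
      = Real.exp (-1) * (expPart (n + 1) - expPart k) := by
      unfold expPart
      rw [← Finset.sum_Ico_eq_sub _ hk, Finset.mul_sum]
      exact Finset.sum_congr rfl fun j _ => by ring
    rw [this, tail_eq]; ring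
  have hE : |Real.exp (-1) * (Real.exp 1 - expPart (n + 1))| ≤ 2 / (n + 1).factorial := by
    rw [abs_mul, abs_of_pos (Real.exp_pos _)]
    have h1 : Real.exp (-1) ≤ 1 := Real.exp_le_one_iff.2 (by norm_num)
    calc _ ≤ 1 * |Real.exp 1 - expPart (n + 1)| :=
          mul_le_mul_of_nonneg_right h1 (abs_nonneg _)
      _ ≤ _ := by rw [one_mul]; exact expPart_approx n
  have hD : |fixTail n k - ∑ j ∈ Finset.Ico k (n + 1), Real.exp (-1) / (Nat.factorial j)|
      ≤ 2 ^ (n + 2) / (n + 1).factorial := by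
    unfold fixTail
    rw [← Finset.sum_sub_distrib]
    refine (Finset.abs_sum_le_sum_abs _ _).trans ?_
    calc _ ≤ ∑ j ∈ Finset.Ico k (n + 1), 2 * ((n + 1).choose j : ℝ) / (n + 1).factorial := by
          apply Finset.sum_le_sum
          intro j hj
          have hj : j ≤ n := by have := Finset.mem_Ico.1 hj; omega
          rw [← sub_div, abs_div, abs_of_pos (show (0 : ℝ) < j.factorial by positivity)]
          rw [Nat.cast_choose ℝ (show j ≤ n + 1 by omega)]
          have h := derProb_approx (n - j)
          rw [show n - j + 1 = n + 1 - j by omega] at h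
          calc _ ≤ (2 / ((n + 1 - j).factorial : ℝ)) / j.factorial :=
                div_le_div_of_nonneg_right h (by positivity)
            _ = _ := by field_simp
      _ ≤ ∑ j ∈ Finset.range (n + 1 + 1), 2 * ((n + 1).choose j : ℝ) / (n + 1).factorial := by
          apply Finset.sum_le_sum_of_subset_of_nonneg
          · intro j hj
            simp only [Finset.mem_Ico, Finset.mem_range] at *
            omega
          · intros; positivity
      _ = _ := by
          rw [← Finset.sum_div, ← Finset.mul_sum]
          have := Nat.sum_range_choose (n + 1)
          have h : ∑ j ∈ Finset.range (n + 1 + 1), ((n + 1).choose j : ℝ) = 2 ^ (n + 1) := by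
            exact_mod_cast this
          rw [h]; ring
  rw [hT, add_div, ← sub_sub]
  exact (abs_sub _ _).trans (add_le_add hD hE)

lemma fact_bound (n : ℕ) (hn : 7 ≤ n) : n ^ 2 * (2 ^ (n + 2) + 2) ≤ (n + 1).factorial := by
  induction n, hn using Nat.le_induction with
  | base => decide
  | succ n hn ih =>
    rw [Nat.factorial_succ]
    have h1 : (n + 1) ^ 2 * 2 ≤ (n + 1 + 1) * n ^ 2 := by nlinarith
    calc (n + 1) ^ 2 * (2 ^ (n + 1 + 2) + 2) ≤ ((n + 1) ^ 2 * 2) * (2 ^ (n + 2) + 2) := by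
          rw [mul_assoc]
          apply Nat.mul_le_mul_left
          rw [pow_succ 2 (n + 2 )]
          ring_nf
          omega
      _ ≤ ((n + 1 + 1) * n ^ 2) * (2 ^ (n + 2) + 2) := Nat.mul_le_mul_right _ h1
      _ = (n + 1 + 1) * (n ^ 2 * (2 ^ (n + 2) + 2)) := by ring
      _ ≤ _ := Nat.mul_le_mul_left _ ih

lemma tail_pos (k : ℕ) : 0 < poissonTail 1 k :=
  lt_of_lt_of_le (by have := Real.exp_pos (-1); positivity) (tail_ge k)

lemma ratio_le {p t c : ℝ} (ht : 0 < t) (h : |p - t| ≤ c * t) : |p / t - 1| ≤ c := by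
  rw [div_sub_one ht.ne', abs_div, abs_of_pos ht, div_le_iff₀ ht]
  exact h

lemma crude (n k : ℕ) : |fixTail n k / poissonTail 1 k - 1| ≤ 1.7183 := by
  apply ratio_le (tail_pos k)
  have h1 := fixTail_nonneg n k
  have h2 := fixTail_le n k
  have h3 := tail_pos k
  have h4 := Real.exp_one_lt_d9
  rw [abs_le]
  constructor <;> nlinarith

lemma exp_neg_one_bounds : 0.36787 < Real.exp (-1) ∧ Real.exp (-1) < 0.36789 := by
  rw [Real.exp_neg]
  have h1 := Real.exp_one_gt_d9
  have h2 := Real.exp_one_lt_d9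
  constructor
  · rw [lt_inv_comm₀ (by norm_num) (Real.exp_pos _)]
    exact h2.trans (by norm_num)
  · rw [inv_lt_comm₀ (Real.exp_pos _) (by norm_num)]
    exact lt_trans (by norm_num) h1

lemma tail_eq' (k : ℕ) : poissonTail 1 k = 1 - Real.exp (-1) * expPart k := by
  rw [tail_eq, mul_sub, ← Real.exp_add]; simp

lemma large (n k : ℕ) (hn : 7 ≤ n) (hk : 2 ≤ k) (hkn : k ≤ n) :
    |fixTail n k - poissonTail 1 k| ≤ (2 / (n : ℝ)) * SteinC1 1 k * poissonTail 1 k := by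
  have h1 := fixTail_approx n k (by omega)
  have hn0 : (7 : ℝ) ≤ n := by exact_mod_cast hn
  have h2 : ((2 : ℝ) ^ (n + 2) + 2) / (n + 1).factorial ≤ 1 / n ^ 2 := by
    rw [div_le_div_iff₀ (by positivity) (by positivity)]
    have := fact_bound n hn
    have h' : (n : ℝ) ^ 2 * (2 ^ (n + 2) + 2) ≤ (n + 1).factorial := by exact_mod_cast this
    linarith
  have he := exp_neg_one_bounds.1
  have h3 : 1 / (2 * (n : ℝ)) ≤ SteinC1 1 k * poissonTail 1 k := by
    have hT := tail_ge k
    rcases (show k = 2 ∨ 3 ≤ k by omega) with rfl | hk3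
    · have hc := C1_two
      have : 1 / (2 * (n : ℝ)) ≤ 1 / (2 * 7) := by
        apply one_div_le_one_div_of_le <;> linarith
      norm_num at hT
      nlinarith
    · have hc := C1_big k hk3
      have hkn' : (k : ℝ) ≤ n := by exact_mod_cast hkn
      have hkp : (0 : ℝ) < k := by exact_mod_cast (by omega : 0 < k)
      calc 1 / (2 * (n : ℝ)) ≤ 1 / (2 * k) := by
            apply one_div_le_one_div_of_le <;> linarith
        _ ≤ (3 / 2 * Real.exp (-1)) / k := by
            rw [div_le_div_iff₀ (by positivity) (by positivity)]
            nlinarith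
        _ = (3 / 2 * ((k - 1).factorial : ℝ)) * (Real.exp (-1) / k.factorial) := by
            rw [← Nat.mul_factorial_pred (show k ≠ 0 by omega)]
            have : ((k - 1).factorial : ℝ) ≠ 0 := by positivity
            push_cast
            field_simp
        _ ≤ _ := by
            apply mul_le_mul hc hT (by have := Real.exp_pos (-1); positivity)
            exact le_trans (by positivity) hc
  refine h1.trans (h2.trans ?_)
  calc 1 / (n : ℝ) ^ 2 = 2 / n * (1 / (2 * n)) := by field_simp
    _ ≤ 2 / n * (SteinC1 1 k * poissonTail 1 k) :=
        mul_le_mul_of_nonneg_left h3 (by positivity)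
    _ = _ := by ring

lemma small_two (n : ℕ) (h1 : 2 ≤ n) (h2 : n ≤ 6) :
    |fixTail n 2 - poissonTail 1 2| ≤ (2 / (n : ℝ)) * poissonTail 1 2 := by
  obtain ⟨e1, e2⟩ := exp_neg_one_bounds
  have hS : expPart 2 = 2 := by norm_num [expPart, Finset.sum_range_succ, Nat.factorial]
  rw [tail_eq', hS]
  interval_cases n <;>
  · norm_num [fixTail, derProb, Finset.sum_Ico_eq_sum_range, Finset.sum_range_succ,
      Nat.factorial, numDerangements]
    rw [abs_le]
    constructor <;> linarith

lemma small_three (n : ℕ) (h1 : 4 ≤ n) (h2 : n ≤ 6) :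
    |fixTail n 3 - poissonTail 1 3| ≤ (2 / (n : ℝ)) * 3 * poissonTail 1 3 := by
  obtain ⟨e1, e2⟩ := exp_neg_one_bounds
  have hS : expPart 3 = 5 / 2 := by norm_num [expPart, Finset.sum_range_succ, Nat.factorial]
  rw [tail_eq', hS]
  interval_cases n <;>
  · norm_num [fixTail, derProb, Finset.sum_Ico_eq_sum_range, Finset.sum_range_succ,
      Nat.factorial, numDerangements]
    rw [abs_le]
    constructor <;> linarith

lemma crude_case (n k : ℕ) (hn : 1 ≤ n) (h : 1.7183 * (n : ℝ) ≤ 2 * SteinC1 1 k) :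
    |fixTail n k / poissonTail 1 k - 1| ≤ (2 / (n : ℝ)) * SteinC1 1 k := by
  refine (crude n k).trans ?_
  have : (0 : ℝ) < n := by exact_mod_cast hn
  rw [div_mul_eq_mul_div, le_div_iff₀ this]
  exact h

lemma fact_ge (k : ℕ) (hk : 3 ≤ k) : 2 * k ≤ 3 * (k - 1).factorial := by
  obtain ⟨m, rfl⟩ : ∃ m, k = m + 3 := ⟨k - 3, by omega⟩
  have : (m + 3 - 1).factorial = (m + 2) * (m + 1).factorial := Nat.factorial_succ (m + 1)
  rw [this]
  have := Nat.factorial_pos (m + 1)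
  nlinarith

lemma main_bound (n k : ℕ) (hn : 1 ≤ n) (hk : 2 ≤ k) :
    |fixTail n k / poissonTail 1 k - 1| ≤ (2 / (n : ℝ)) * SteinC1 1 k := by
  have hn0 : (0 : ℝ) < n := by exact_mod_cast hn
  rcases (show k = 2 ∨ 3 ≤ k by omega) with rfl | hk3
  · have hc := C1_two
    rcases (show n = 1 ∨ (2 ≤ n ∧ n ≤ 6) ∨ 7 ≤ n by omega) with rfl | h | h
    · apply crude_case 1 2 hn
      norm_num; linarith
    · refine (ratio_le (tail_pos 2) (small_two n h.1 h.2)).trans ?_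
      exact le_mul_of_one_le_right (by positivity) hc
    · exact ratio_le (tail_pos 2) (large n 2 h hk (by omega))
  · have hc := C1_big k hk3
    by_cases h7 : 7 ≤ n ∧ k ≤ n
    · exact ratio_le (tail_pos k) (large n k h7.1 hk h7.2)
    by_cases hs : k = 3 ∧ 4 ≤ n ∧ n ≤ 6
    · obtain ⟨rfl, h1, h2⟩ := hs
      refine (ratio_le (tail_pos 3) (small_three n h1 h2)).trans ?_
      apply mul_le_mul_of_nonneg_left _ (by positivity)
      norm_num at hc
      exact hc
    · apply crude_case n k hn
      have key : n ≤ k ∨ (4 ≤ k ∧ n ≤ 6) := by omega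
      have hf : 2 * n ≤ 3 * (k - 1).factorial := by
        rcases key with h | h
        · have := fact_ge k hk3
          omega
        · have h6 : (3).factorial ≤ (k - 1).factorial := Nat.factorial_le (by omega)
          have : (3).factorial = 6 := rfl
          omega
      have hf' : 2 * (n : ℝ) ≤ 3 * ((k - 1).factorial : ℝ) := by exact_mod_cast hf
      linarith

/-- Matching problem: moderate deviation bound for the number of fixed points
of a uniform random permutation. -/
theorem matching_md (n : ℕ) (hn : 1 ≤ n)
    [MeasurableSpace (Equiv.Perm (Fin n))] [MeasurableSingletonClass (Equiv.Perm (Fin n))]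
    (P : Measure (Equiv.Perm (Fin n)))
    (hP : P = (PMF.uniformOfFintype (Equiv.Perm (Fin n))).toMeasure)
    (W : Equiv.Perm (Fin n) → ℕ) (hW : W = fun σ => Nat.card {j : Fin n // σ j = j})
    (k : ℕ) (hk : 2 ≤ k) :
    |(P {σ | k ≤ W σ}).toReal / poissonTail 1 k - 1| ≤ (2 / (n : ℝ)) * SteinC1 1 k := by
  subst hP hW
  rw [prob_formula]
  exact main_bound n k hn hk
end
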